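/- Let ρ^{ABCD} be a state of a quadripartite quantum system on finite-dimensional Hilbert spaces such that S(AB) + S(BC) − S(B) − S(ABC) = 0, S(CA) + S(AB) − S(A) − S(CAB) = 0, and S(AD) + S(DB) − S(D) − S(ADB) = 0. Then S(ABC) + S(D) ≥ S(AB) + S(CD), equivalently I(ABC;D) ≥ I(AB;CD). -/

import Mathlib

open scoped BigOperators ComplexOrder

/-- Von Neumann entropy (base 2) of a matrix: for a Hermitian matrix, the Shannon
entropy of its eigenvalues; junk value `0` for non-Hermitian matrices. -/
noncomputable def vNEntropy {n : Type*} [Fintype n] [DecidableEq n] (M : Matrix n n ℂ) : ℝ :=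
  if h : M.IsHermitian then -∑ i, (h.eigenvalues i) * Real.logb 2 (h.eigenvalues i) else 0

/-- A density matrix: positive semidefinite with trace one. -/
def IsState {n : Type*} [Fintype n] [DecidableEq n] (M : Matrix n n ℂ) : Prop :=
  M.PosSemidef ∧ M.trace = 1

section Quad

variable {A B C D : Type*} [Fintype A] [DecidableEq A] [Fintype B] [DecidableEq B]
  [Fintype C] [DecidableEq C] [Fintype D] [DecidableEq D]
  (ρ : Matrix (A × B × C × D) (A × B × C × D) ℂ)

/-- Entropies of the 15 marginals of a quadripartite state. -/
noncomputable def SA : ℝ :=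
  vNEntropy (Matrix.of fun a a' : A => ∑ b, ∑ c, ∑ d, ρ (a, b, c, d) (a', b, c, d))
noncomputable def SB : ℝ :=
  vNEntropy (Matrix.of fun b b' : B => ∑ a, ∑ c, ∑ d, ρ (a, b, c, d) (a, b', c, d))
noncomputable def SC : ℝ :=
  vNEntropy (Matrix.of fun c c' : C => ∑ a, ∑ b, ∑ d, ρ (a, b, c, d) (a, b, c', d))
noncomputable def SD : ℝ :=
  vNEntropy (Matrix.of fun d d' : D => ∑ a, ∑ b, ∑ c, ρ (a, b, c, d) (a, b, c, d'))
noncomputable def SAB : ℝ :=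
  vNEntropy (Matrix.of fun p q : A × B => ∑ c, ∑ d, ρ (p.1, p.2, c, d) (q.1, q.2, c, d))
noncomputable def SAC : ℝ :=
  vNEntropy (Matrix.of fun p q : A × C => ∑ b, ∑ d, ρ (p.1, b, p.2, d) (q.1, b, q.2, d))
noncomputable def SAD : ℝ :=
  vNEntropy (Matrix.of fun p q : A × D => ∑ b, ∑ c, ρ (p.1, b, c, p.2) (q.1, b, c, q.2))
noncomputable def SBC : ℝ :=
  vNEntropy (Matrix.of fun p q : B × C => ∑ a, ∑ d, ρ (a, p.1, p.2, d) (a, q.1, q.2, d))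
noncomputable def SBD : ℝ :=
  vNEntropy (Matrix.of fun p q : B × D => ∑ a, ∑ c, ρ (a, p.1, c, p.2) (a, q.1, c, q.2))
noncomputable def SCD : ℝ :=
  vNEntropy (Matrix.of fun p q : C × D => ∑ a, ∑ b, ρ (a, b, p.1, p.2) (a, b, q.1, q.2))
noncomputable def SABC : ℝ :=
  vNEntropy (Matrix.of fun p q : A × B × C =>
    ∑ d, ρ (p.1, p.2.1, p.2.2, d) (q.1, q.2.1, q.2.2, d))
noncomputable def SABD : ℝ :=
  vNEntropy (Matrix.of fun p q : A × B × D =>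
    ∑ c, ρ (p.1, p.2.1, c, p.2.2) (q.1, q.2.1, c, q.2.2))
noncomputable def SACD : ℝ :=
  vNEntropy (Matrix.of fun p q : A × C × D =>
    ∑ b, ρ (p.1, b, p.2.1, p.2.2) (q.1, b, q.2.1, q.2.2))
noncomputable def SBCD : ℝ :=
  vNEntropy (Matrix.of fun p q : B × C × D =>
    ∑ a, ρ (a, p.1, p.2.1, p.2.2) (a, q.1, q.2.1, q.2.2))
noncomputable def SABCD : ℝ := vNEntropy ρ

end Quad

/-!
The two Markov conditions on `ABC` say that `√ρ_ABC` is obtained from `√ρ_AB` by applying, for each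
matrix unit of `C`, a matrix on `B` (namely a block of `√ρ_BC ρ_B^(-1/2)`) and equally a matrix on
`A`. Matrices on `A` commute with matrices on `B`, so the blocks commute with each other and with
`ρ_B`, and diagonalizing them shows that `ρ_BC = ∑ b, λ_b |v_b⟩⟨v_b| ⊗ ν_b`. The distinct values of
the blocks form a label that can be measured on `A` and on `B` with the same result. As `A – D – B`
is Markov, the label can then be read off from `D` too: the states of `D` conditional on different
labels have orthogonal supports. Hence `S(C|D)` is at most the average of the entropies of `C`
conditional on the label, which is `S(C|B) = S(C|AB)`.

The conditions enter through the equality case of strong subadditivity, which reads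
`√ρ_XYZ = √ρ_YZ ρ_Y^(-1/2) √ρ_XY`. It is obtained from the monotonicity of the relative entropy: the
derivative of the lost relative entropy along the path `(1 - u) L + u R` between left
multiplication by `σ` and right multiplication by `ρ` is a nonnegative quadratic form in the
defect of a Sylvester equation, which therefore vanishes in the case of equality.
-/

open Matrix

/-! ### Functional calculus of Hermitian matrices -/

section FunctionalCalculus

variable {m n : Type*} [Fintype m] [DecidableEq m] [Fintype n] [DecidableEq n]

lemma continuousOn_real_spectrum (f : ℝ → ℝ) (M : Matrix n n ℂ) :
    ContinuousOn f (spectrum ℝ M) :=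
  have : Finite (spectrum ℝ M) := Matrix.finite_real_spectrum
  (Set.toFinite _).continuousOn f

lemma cfc_mul_cfc (f g : ℝ → ℝ) (M : Matrix n n ℂ) :
    cfc f M * cfc g M = cfc (fun x => f x * g x) M :=
  (cfc_mul f g M (continuousOn_real_spectrum f M) (continuousOn_real_spectrum g M)).symm

lemma conjTranspose_cfc (f : ℝ → ℝ) (M : Matrix n n ℂ) : (cfc f M)ᴴ = cfc f M :=
  cfc_predicate (p := IsSelfAdjoint) f M

lemma map_cfc_matrix (φ : Matrix m m ℂ →⋆ₐ[ℂ] Matrix n n ℂ) (f : ℝ → ℝ) {M : Matrix m m ℂ}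
    (hM : M.IsHermitian) : φ (cfc f M) = cfc f (φ M) :=
  StarAlgHomClass.map_cfc (R := ℝ) (S := ℂ) φ f M (continuousOn_real_spectrum f M)
    φ.toAlgHom.toLinearMap.continuous_of_finiteDimensional hM
    (IsSelfAdjoint.map (show IsSelfAdjoint M from hM) φ)

lemma cfc_id_of_isHermitian {M : Matrix n n ℂ} (hM : M.IsHermitian) :
    cfc (fun x : ℝ => x) M = M :=
  cfc_id' ℝ M hM

lemma cfc_one_of_isHermitian {M : Matrix n n ℂ} (hM : M.IsHermitian) :
    cfc (fun _ : ℝ => (1 : ℝ)) M = 1 :=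
  cfc_const_one ℝ M hM

lemma cfc_eq_eigenvectorUnitary_mul {M : Matrix n n ℂ} (hM : M.IsHermitian) (f : ℝ → ℝ) :
    cfc f M = (hM.eigenvectorUnitary : Matrix n n ℂ) *
      diagonal (fun i => (f (hM.eigenvalues i) : ℂ)) *
        (hM.eigenvectorUnitary : Matrix n n ℂ)ᴴ := by
  rw [hM.cfc_eq, IsHermitian.cfc, Unitary.conjStarAlgAut_apply]
  rfl

lemma trace_cfc {M : Matrix n n ℂ} (hM : M.IsHermitian) (f : ℝ → ℝ) :
    (cfc f M).trace = ∑ i, (f (hM.eigenvalues i) : ℂ) := by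
  rw [cfc_eq_eigenvectorUnitary_mul hM, trace_mul_cycle, ← star_eq_conjTranspose,
    Unitary.coe_star_mul_self, Matrix.one_mul, trace_diagonal]

lemma aeval_mul_eq_mul_aeval {A : Matrix m m ℂ} {B : Matrix n n ℂ} {X : Matrix m n ℂ}
    (h : A * X = X * B) (p : Polynomial ℝ) :
    Polynomial.aeval A p * X = X * Polynomial.aeval B p := by
  induction p using Polynomial.induction_on' with
  | add p q hp hq => simp only [map_add, Matrix.add_mul, Matrix.mul_add, hp, hq]
  | monomial k c =>
    have pow : A ^ k * X = X * B ^ k := by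
      induction k with
      | zero => simp only [pow_zero, Matrix.one_mul, Matrix.mul_one]
      | succ k ih => rw [pow_succ, pow_succ, Matrix.mul_assoc, h, ← Matrix.mul_assoc, ih,
          Matrix.mul_assoc]
    simp only [Polynomial.aeval_monomial, Algebra.algebraMap_eq_smul_one, smul_mul_assoc, one_mul,
      Matrix.smul_mul, Matrix.mul_smul, pow]

/- The spectra are finite, so `f` may be replaced by an interpolation polynomial. -/
lemma cfc_mul_eq_mul_cfc {A : Matrix m m ℂ} {B : Matrix n n ℂ} {X : Matrix m n ℂ}
    (hA : A.IsHermitian) (hB : B.IsHermitian) (h : A * X = X * B) (f : ℝ → ℝ) :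
    cfc f A * X = X * cfc f B := by
  have finA : Finite (spectrum ℝ A) := Matrix.finite_real_spectrum
  have finB : Finite (spectrum ℝ B) := Matrix.finite_real_spectrum
  set s : Finset ℝ := ((Set.toFinite (spectrum ℝ A)).union (Set.toFinite (spectrum ℝ B))).toFinset
  set p : Polynomial ℝ := Lagrange.interpolate s id f
  have eval_p : ∀ x ∈ spectrum ℝ A ∪ spectrum ℝ B, f x = p.eval x := fun x hx =>
    (Lagrange.eval_interpolate_at_node (v := id) f (Function.injective_id.injOn)
      ((Set.Finite.mem_toFinset _).2 hx)).symm
  have cfc_A : cfc f A = Polynomial.aeval A p := by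
    rw [← cfc_polynomial p A hA]
    exact cfc_congr fun x hx => eval_p x (Or.inl hx)
  have cfc_B : cfc f B = Polynomial.aeval B p := by
    rw [← cfc_polynomial p B hB]
    exact cfc_congr fun x hx => eval_p x (Or.inr hx)
  rw [cfc_A, cfc_B, aeval_mul_eq_mul_aeval h]

variable {l : Type*} {M : Matrix n n ℂ}

lemma cfc_congr_of_posSemidef (hM : M.PosSemidef) {f g : ℝ → ℝ}
    (h : ∀ x, 0 ≤ x → f x = g x) : cfc f M = cfc g M := by
  rw [cfc_eq_eigenvectorUnitary_mul hM.1, cfc_eq_eigenvectorUnitary_mul hM.1]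
  simp only [h _ (hM.eigenvalues_nonneg _)]

lemma cfc_eq_self_of_posSemidef (hM : M.PosSemidef) {f : ℝ → ℝ}
    (h : ∀ x, 0 ≤ x → f x = x) : cfc f M = M :=
  (cfc_congr_of_posSemidef hM h).trans (cfc_id_of_isHermitian hM.1)

lemma cfc_mul_self_of_posSemidef (hM : M.PosSemidef) (f : ℝ → ℝ) :
    cfc f M * M = cfc (fun x => f x * x) M := by
  rw [← cfc_mul_cfc, cfc_id_of_isHermitian hM.1]

/-- The inverse square root. As `invSqrt 0 = 0`, the matrix `cfc invSqrt M` is the pseudo-inverse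
of the square root of `M`, vanishing on its kernel. -/
noncomputable def invSqrt (x : ℝ) : ℝ := (√x)⁻¹

/-- Indicator of the nonzero reals; `cfc nonzeroIndicator M` is the support projection of `M`. -/
noncomputable def nonzeroIndicator (x : ℝ) : ℝ := if x = 0 then 0 else 1

lemma nonzeroIndicator_mul_self (x : ℝ) : nonzeroIndicator x * x = x := by
  by_cases h : x = 0 <;> simp [nonzeroIndicator, h]

lemma sqrt_mul_invSqrt (x : ℝ) (hx : 0 ≤ x) : √x * invSqrt x = nonzeroIndicator x := by
  by_cases h : x = 0
  · simp [nonzeroIndicator, h]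
  · simp [nonzeroIndicator, invSqrt, h, Real.sqrt_ne_zero hx]

lemma cfc_sqrt_mul_cfc_sqrt (hM : M.PosSemidef) : cfc Real.sqrt M * cfc Real.sqrt M = M := by
  rw [cfc_mul_cfc, cfc_eq_self_of_posSemidef hM fun x hx => Real.mul_self_sqrt hx]

lemma cfc_nonzeroIndicator_mul_self (hM : M.PosSemidef) : cfc nonzeroIndicator M * M = M := by
  rw [cfc_mul_self_of_posSemidef hM,
    cfc_eq_self_of_posSemidef hM fun x _ => nonzeroIndicator_mul_self x]

lemma cfc_sqrt_mul_cfc_invSqrt (hM : M.PosSemidef) :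
    cfc Real.sqrt M * cfc invSqrt M = cfc nonzeroIndicator M := by
  rw [cfc_mul_cfc, cfc_congr_of_posSemidef hM sqrt_mul_invSqrt]

lemma cfc_invSqrt_mul_cfc_sqrt (hM : M.PosSemidef) :
    cfc invSqrt M * cfc Real.sqrt M = cfc nonzeroIndicator M := by
  rw [← cfc_sqrt_mul_cfc_invSqrt hM, cfc_mul_cfc, cfc_mul_cfc]
  simp only [mul_comm]

lemma mul_cfc_sqrt_eq_zero_iff {X : Matrix l n ℂ} (hM : M.PosSemidef) :
    X * cfc Real.sqrt M = 0 ↔ X * M = 0 := by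
  refine ⟨fun h => ?_, fun h => ?_⟩
  · rw [← cfc_sqrt_mul_cfc_sqrt hM, ← Matrix.mul_assoc, h, Matrix.zero_mul]
  · have sqrt_eq : cfc Real.sqrt M * cfc Real.sqrt M * cfc invSqrt M = cfc Real.sqrt M := by
      rw [Matrix.mul_assoc, cfc_sqrt_mul_cfc_invSqrt hM, cfc_mul_cfc]
      congr 1
      ext x
      by_cases hx : x = 0 <;> simp [nonzeroIndicator, hx]
    rw [← sqrt_eq, cfc_sqrt_mul_cfc_sqrt hM, ← Matrix.mul_assoc, h, Matrix.zero_mul]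

end FunctionalCalculus

lemma mul_eq_zero_of_trace {l n : Type*} [Fintype l] [Fintype n] {X : Matrix l n ℂ}
    {M : Matrix n n ℂ} (hM : M.PosSemidef) (h : (Xᴴ * X * M).trace = 0) : X * M = 0 := by
  classical
  rw [← mul_cfc_sqrt_eq_zero_iff hM, ← trace_conjTranspose_mul_self_eq_zero_iff, ← h,
    conjTranspose_mul, conjTranspose_cfc, Matrix.mul_assoc, trace_mul_comm, ← Matrix.mul_assoc,
    Matrix.mul_assoc, cfc_sqrt_mul_cfc_sqrt hM]

/-! ### Entropy -/

section Entropy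

variable {m n : Type*} [Fintype m] [DecidableEq m] [Fintype n] [DecidableEq n]

/-- The von Neumann entropy `-Tr M log M` in natural units. -/
noncomputable def natEntropy (M : Matrix n n ℂ) : ℝ := (cfc Real.negMulLog M).trace.re

lemma natEntropy_eq_sum {M : Matrix n n ℂ} (hM : M.IsHermitian) :
    natEntropy M = ∑ i, Real.negMulLog (hM.eigenvalues i) := by
  rw [natEntropy, trace_cfc hM, ← Complex.ofReal_sum, Complex.ofReal_re]

lemma vNEntropy_mul_log_two {M : Matrix n n ℂ} (hM : M.IsHermitian) :
    vNEntropy M * Real.log 2 = natEntropy M := by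
  have log_two : Real.log 2 ≠ 0 := (Real.log_pos one_lt_two).ne'
  rw [vNEntropy, dif_pos hM, natEntropy_eq_sum hM, neg_mul, Finset.sum_mul,
    ← Finset.sum_neg_distrib]
  refine Finset.sum_congr rfl fun i _ => ?_
  rw [Real.negMulLog, Real.logb]
  field_simp

lemma trace_mul_cfc_log {M : Matrix n n ℂ} (hM : M.IsHermitian) :
    (M * cfc Real.log M).trace = -(natEntropy M : ℂ) := by
  nth_rewrite 1 [← cfc_id_of_isHermitian hM]
  rw [cfc_mul_cfc, trace_cfc hM, natEntropy_eq_sum hM, Complex.ofReal_sum,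
    ← Finset.sum_neg_distrib]
  refine Finset.sum_congr rfl fun i _ => ?_
  rw [Real.negMulLog, ← Complex.ofReal_neg]
  ring_nf

lemma natEntropy_smul {M : Matrix n n ℂ} (hM : M.IsHermitian) (c : ℝ) :
    natEntropy ((c : ℂ) • M) = c * natEntropy M + Real.negMulLog c * M.trace.re := by
  have smul_eq : (c : ℂ) • M = cfc (fun x : ℝ => c * x) M := by
    rw [cfc_const_mul c (fun x : ℝ => x) M (continuousOn_real_spectrum _ M),
      cfc_id_of_isHermitian hM]
    rfl
  have negMulLog_eq : cfc Real.negMulLog ((c : ℂ) • M) =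
      cfc (fun x => Real.negMulLog (c * x)) M := by
    rw [smul_eq]
    exact (cfc_comp' Real.negMulLog (fun x : ℝ => c * x) M (Real.continuous_negMulLog.continuousOn)
      (continuousOn_real_spectrum _ M) hM).symm
  rw [natEntropy, negMulLog_eq, trace_cfc hM, natEntropy_eq_sum hM, hM.trace_eq_sum_eigenvalues]
  simp only [Complex.coe_algebraMap, ← Complex.ofReal_sum, Complex.ofReal_re, Real.negMulLog_mul]
  rw [Finset.sum_add_distrib, ← Finset.sum_mul, ← Finset.mul_sum]
  ring

/- `X j` intertwines `∑ j, X j * Y j` with `Y j * X j`, hence also their logarithms. -/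
lemma natEntropy_sum_mul {ι : Type*} [Fintype ι] {X : ι → Matrix m n ℂ} {Y : ι → Matrix n m ℂ}
    (herm : (∑ j, X j * Y j).IsHermitian) (herm_block : ∀ j, (Y j * X j).IsHermitian)
    (orth : ∀ i j, i ≠ j → Y i * X j = 0) :
    natEntropy (∑ j, X j * Y j) = ∑ j, natEntropy (Y j * X j) := by
  classical
  set κ := ∑ j, X j * Y j with κ_def
  have intertwine (j : ι) : κ * X j = X j * (Y j * X j) := by
    rw [κ_def, Matrix.sum_mul, Finset.sum_eq_single j _ (by simp), Matrix.mul_assoc]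
    intro i _ hij
    rw [Matrix.mul_assoc, orth i j hij, Matrix.mul_zero]
  have trace_log : (κ * cfc Real.log κ).trace =
      ∑ j, (Y j * X j * cfc Real.log (Y j * X j)).trace := by
    rw [trace_mul_comm]
    nth_rewrite 2 [κ_def]
    rw [Matrix.mul_sum, trace_sum]
    refine Finset.sum_congr rfl fun j _ => ?_
    rw [← Matrix.mul_assoc, cfc_mul_eq_mul_cfc herm (herm_block j) (intertwine j) Real.log,
      trace_mul_comm, Matrix.mul_assoc]
  rw [trace_mul_cfc_log herm] at trace_log
  simp only [trace_mul_cfc_log (herm_block _), Finset.sum_neg_distrib, neg_inj] at trace_log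
  exact_mod_cast trace_log

end Entropy

/-! ### Interpolation between two positive numbers -/

section Scalar

/- Partial fractions: clear denominators in `∑ j, c j / (y + j + 1)` and interpolate the
numerator. -/
lemma exists_eq_sum_mul_inv_add (S : Finset ℝ) (hS : ∀ y ∈ S, 0 ≤ y) (f : ℝ → ℝ) :
    ∃ c : ℕ → ℝ, ∀ y ∈ S, f y = ∑ j ∈ Finset.range S.card, c j * (y + (j + 1))⁻¹ := by
  classical
  set T := Finset.range S.card
  let v : ℕ → ℝ := fun j => -((j : ℝ) + 1)
  have v_inj : Set.InjOn v T := fun i _ j _ h => by simpa [v] using h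
  let denominator := Lagrange.nodal T v
  let numerator := Lagrange.interpolate S id fun y => f y * denominator.eval y
  have partial_fractions : numerator = Lagrange.interpolate T v fun j => numerator.eval (v j) :=
    Lagrange.eq_interpolate v_inj <| by
      rw [Finset.card_range]
      exact Lagrange.degree_interpolate_lt _ Function.injective_id.injOn
  refine ⟨fun j => Lagrange.nodalWeight T v j * numerator.eval (v j), fun y hy => ?_⟩
  have y_ne (j : ℕ) : y ≠ v j := by
    have := hS y hy
    have : v j < 0 := by simp only [v, neg_lt_zero]; positivity
    linarith
  have denominator_ne : denominator.eval y ≠ 0 := by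
    rw [Lagrange.eval_nodal]
    exact Finset.prod_ne_zero_iff.2 fun j _ => sub_ne_zero.2 (y_ne j)
  have numerator_eval : numerator.eval y = f y * denominator.eval y :=
    Lagrange.eval_interpolate_at_node (v := id) _ Function.injective_id.injOn hy
  rw [partial_fractions, Lagrange.eval_interpolate_not_at_node _ fun j _ => y_ne j,
    mul_comm] at numerator_eval
  rw [← mul_right_cancel₀ denominator_ne numerator_eval]
  refine Finset.sum_congr rfl fun j _ => ?_
  simp only [v]
  ring

/-- The solution `z = y / ((1 - u) x + u y)` of the scalar Sylvester equation
`(1 - u) x z + u z y = y`; it is also, up to an affine change, the derivative in `u` of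
`log ((1 - u) x + u y)`. -/
noncomputable def sylvesterKernel (u x y : ℝ) : ℝ := y / ((1 - u) * x + u * y)

lemma sylvesterKernel_spec {u x y : ℝ} (hu : u ∈ Set.Ioo (0 : ℝ) 1) (hx : 0 ≤ x) (hy : 0 ≤ y) :
    (1 - u) * (x * sylvesterKernel u x y) + u * (sylvesterKernel u x y * y) = y := by
  obtain ⟨hu0, hu1⟩ := hu
  rcases hy.eq_or_lt with rfl | hy
  · simp [sylvesterKernel]
  · have := mul_nonneg (sub_nonneg.2 hu1.le) hx
    have : 0 < (1 - u) * x + u * y := by positivity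
    rw [sylvesterKernel]
    field_simp

lemma sylvesterKernel_div_add_one {s x y : ℝ} (hs : 0 < s) (hx : 0 ≤ x) (hy : 0 < y) :
    sylvesterKernel (s / (s + 1)) x y = (s + 1) * (x / y + s)⁻¹ := by
  have : 0 < x + s * y := by positivity
  have mix : (1 - s / (s + 1)) * x + s / (s + 1) * y = (x + s * y) / (s + 1) := by
    field_simp
    ring
  have ratio : x / y + s = (x + s * y) / y := by field_simp
  rw [sylvesterKernel, mix, ratio]
  field_simp

/- For `y ≠ 0` both sides depend on `x / y` only. -/
lemma exists_invSqrt_mul_sqrt_eq_sum_sylvesterKernel (P : Finset (ℝ × ℝ))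
    (hP : ∀ p ∈ P, 0 ≤ p.1 ∧ 0 ≤ p.2) :
    ∃ (N : ℕ) (u c : ℕ → ℝ), (∀ j, u j ∈ Set.Ioo (0 : ℝ) 1) ∧ ∀ p ∈ P,
      invSqrt p.1 * √p.2 = ∑ j ∈ Finset.range N, c j * sylvesterKernel (u j) p.1 p.2 := by
  classical
  let ratios : Finset ℝ := P.image fun p => p.1 / p.2
  have ratios_nonneg : ∀ x ∈ ratios, 0 ≤ x := by
    simp only [ratios, Finset.mem_image]
    rintro _ ⟨p, hp, rfl⟩
    exact div_nonneg (hP p hp).1 (hP p hp).2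
  obtain ⟨c, hc⟩ := exists_eq_sum_mul_inv_add ratios ratios_nonneg invSqrt
  refine ⟨ratios.card, fun j => ((j : ℝ) + 1) / (j + 1 + 1), fun j => c j / (j + 1 + 1),
    fun j => ⟨by positivity, (div_lt_one (by positivity)).2 (by linarith)⟩, fun p hp => ?_⟩
  obtain ⟨hx, hy⟩ := hP p hp
  rcases hy.eq_or_lt with hy | hy
  · simp [← hy, sylvesterKernel]
  have sqrt_ratio : invSqrt p.1 * √p.2 = invSqrt (p.1 / p.2) := by
    rw [invSqrt, invSqrt, Real.sqrt_div' _ hy.le, inv_div, div_eq_mul_inv, mul_comm]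
  rw [sqrt_ratio, hc _ (Finset.mem_image_of_mem _ hp)]
  refine Finset.sum_congr rfl fun j _ => ?_
  rw [sylvesterKernel_div_add_one (by positivity) hx hy]
  field_simp

section WeightedLog

variable {α : Type*} [Fintype α] {a s r : α → ℝ}

lemma continuousOn_sum_mul_log_mix (h : ∀ i, a i ≠ 0 → 0 < s i ∧ 0 < r i) :
    ContinuousOn (fun u => ∑ i, a i * Real.log ((1 - u) * s i + u * r i)) (Set.Icc 0 1) := by
  refine continuousOn_finsetSum _ fun i _ => ?_
  by_cases hi : a i = 0
  · simp only [hi, zero_mul]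
    exact continuousOn_const
  · obtain ⟨hs, hr⟩ := h i hi
    refine continuousOn_const.mul (ContinuousOn.log (by fun_prop) fun u hu => ne_of_gt ?_)
    exact convex_Ioi (0 : ℝ) hs hr (sub_nonneg.2 hu.2) hu.1 (sub_add_cancel 1 u)

lemma hasDerivAt_sum_mul_log_mix (h : ∀ i, a i ≠ 0 → 0 < s i ∧ 0 < r i) {u : ℝ}
    (hu : u ∈ Set.Ioo (0 : ℝ) 1) :
    HasDerivAt (fun u => ∑ i, a i * Real.log ((1 - u) * s i + u * r i))
      ((1 - u)⁻¹ * ((∑ i, a i * sylvesterKernel u (s i) (r i)) - ∑ i, a i)) u := by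
  rw [← Finset.sum_sub_distrib, Finset.mul_sum]
  refine HasDerivAt.fun_sum fun i _ => ?_
  by_cases hi : a i = 0
  · simp only [hi, zero_mul, sub_zero, mul_zero]
    exact hasDerivAt_const _ _
  · obtain ⟨hs, hr⟩ := h i hi
    have hu0 := hu.1
    have hu1 : 0 < 1 - u := sub_pos.2 hu.2
    have mix_pos : 0 < (1 - u) * s i + u * r i := by positivity
    have mix_deriv : HasDerivAt (fun u : ℝ => (1 - u) * s i + u * r i) (-1 * s i + 1 * r i) u :=
      (((hasDerivAt_id u).const_sub 1).mul_const _).add ((hasDerivAt_id u).mul_const _)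
    refine ((mix_deriv.log mix_pos.ne').const_mul (a i)).congr_deriv ?_
    rw [sylvesterKernel]
    field_simp
    ring

end WeightedLog

section Monotone

variable {a b : ℝ} {G G' : ℝ → ℝ}

lemma monotoneOn_Icc_of_hasDerivAt_nonneg (cont : ContinuousOn G (Set.Icc a b))
    (deriv_eq : ∀ u ∈ Set.Ioo a b, HasDerivAt G (G' u) u)
    (nonneg : ∀ u ∈ Set.Ioo a b, 0 ≤ G' u) : MonotoneOn G (Set.Icc a b) := by
  refine monotoneOn_of_hasDerivWithinAt_nonneg (convex_Icc a b) cont (f' := G') ?_ ?_ <;>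
    rw [interior_Icc]
  exacts [fun u hu => (deriv_eq u hu).hasDerivWithinAt, nonneg]

lemma hasDerivAt_eq_zero_of_endpoints_eq (cont : ContinuousOn G (Set.Icc a b))
    (deriv_eq : ∀ u ∈ Set.Ioo a b, HasDerivAt G (G' u) u)
    (nonneg : ∀ u ∈ Set.Ioo a b, 0 ≤ G' u) (hG : G a = G b) : ∀ u ∈ Set.Ioo a b, G' u = 0 := by
  intro u hu
  have hab : a ≤ b := (hu.1.trans hu.2).le
  have mono := monotoneOn_Icc_of_hasDerivAt_nonneg cont deriv_eq nonneg
  have const : ∀ x ∈ Set.Icc a b, G x = G a := fun x hx =>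
    le_antisymm (hG ▸ mono hx (Set.right_mem_Icc.2 hab) hx.2)
      (mono (Set.left_mem_Icc.2 hab) hx hx.1)
  have deriv_zero : HasDerivAt G 0 u := by
    refine (hasDerivAt_const u (G a)).congr_of_eventuallyEq ?_
    filter_upwards [Icc_mem_nhds hu.1 hu.2] with x hx using const x hx
  exact (deriv_eq u hu).unique deriv_zero

end Monotone

end Scalar

/-! ### Functions of left and right multiplication -/

section DoubleFunctionalCalculus

variable {n : Type*} [Fintype n] [DecidableEq n]

/-- The rank-one projection onto the `k`-th eigenvector of a Hermitian matrix. -/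
noncomputable def spectralProjection {M : Matrix n n ℂ} (hM : M.IsHermitian) (k : n) :
    Matrix n n ℂ :=
  (hM.eigenvectorUnitary : Matrix n n ℂ) * single k k 1 * (hM.eigenvectorUnitary : Matrix n n ℂ)ᴴ

lemma cfc_eq_sum_spectralProjection {M : Matrix n n ℂ} (hM : M.IsHermitian) (f : ℝ → ℝ) :
    cfc f M = ∑ k, f (hM.eigenvalues k) • spectralProjection hM k := by
  have diagonal_eq : diagonal (fun k => (f (hM.eigenvalues k) : ℂ)) =
      ∑ k, f (hM.eigenvalues k) • single k k (1 : ℂ) := by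
    rw [← sum_single_eq_diagonal]
    simp only [smul_single, Complex.real_smul, mul_one]
  rw [cfc_eq_eigenvectorUnitary_mul hM, diagonal_eq, Matrix.mul_sum, Matrix.sum_mul]
  simp only [spectralProjection, Matrix.mul_smul, Matrix.smul_mul]

lemma spectralProjection_mul_spectralProjection {M : Matrix n n ℂ} (hM : M.IsHermitian)
    (k l : n) : spectralProjection hM k * spectralProjection hM l =
      if k = l then spectralProjection hM k else 0 := by
  have unitary : (hM.eigenvectorUnitary : Matrix n n ℂ)ᴴ * hM.eigenvectorUnitary = 1 :=
    Unitary.coe_star_mul_self _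
  have collapse (X Y V W : Matrix n n ℂ) (h : W * V = 1) :
      V * X * W * (V * Y * W) = V * (X * Y) * W := by
    rw [Matrix.mul_assoc, ← Matrix.mul_assoc W, ← Matrix.mul_assoc W, h, Matrix.one_mul]
    simp only [Matrix.mul_assoc]
  rw [spectralProjection, spectralProjection, collapse _ _ _ _ unitary]
  split_ifs with h
  · rw [h, single_mul_single_same, mul_one]
  · rw [single_mul_single_of_ne _ _ _ _ h, Matrix.mul_zero, Matrix.zero_mul]

lemma cfc_mul_spectralProjection {M : Matrix n n ℂ} (hM : M.IsHermitian) (f : ℝ → ℝ) (k : n) :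
    cfc f M * spectralProjection hM k = f (hM.eigenvalues k) • spectralProjection hM k := by
  simp only [cfc_eq_sum_spectralProjection hM, Matrix.sum_mul, Matrix.smul_mul,
    spectralProjection_mul_spectralProjection, smul_ite, smul_zero, Finset.sum_ite_eq',
    Finset.mem_univ, if_true]

lemma spectralProjection_mul_cfc {M : Matrix n n ℂ} (hM : M.IsHermitian) (f : ℝ → ℝ) (k : n) :
    spectralProjection hM k * cfc f M = f (hM.eigenvalues k) • spectralProjection hM k := by
  simp only [cfc_eq_sum_spectralProjection hM, Matrix.mul_sum, Matrix.mul_smul,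
    spectralProjection_mul_spectralProjection, smul_ite, smul_zero, Finset.sum_ite_eq,
    Finset.mem_univ, if_true]

variable {σ ρ : Matrix n n ℂ} (hσ : σ.IsHermitian) (hρ : ρ.IsHermitian)

/-- The value at the identity of the function `F(L, R)` of the commuting operators `L` of left
multiplication by `σ` and `R` of right multiplication by `ρ`. -/
noncomputable def doubleCFC : (ℝ → ℝ → ℝ) →ₗ[ℝ] Matrix n n ℂ where
  toFun F := ∑ p : n × n, F (hσ.eigenvalues p.1) (hρ.eigenvalues p.2) •
    (spectralProjection hσ p.1 * spectralProjection hρ p.2)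
  map_add' F G := by simp only [Pi.add_apply, add_smul, Finset.sum_add_distrib]
  map_smul' c F := by
    simp only [Pi.smul_apply, smul_eq_mul, mul_smul, Finset.smul_sum, RingHom.id_apply]

lemma doubleCFC_apply (F : ℝ → ℝ → ℝ) :
    doubleCFC hσ hρ F = ∑ p : n × n, F (hσ.eigenvalues p.1) (hρ.eigenvalues p.2) •
      (spectralProjection hσ p.1 * spectralProjection hρ p.2) := rfl

lemma doubleCFC_congr {F G : ℝ → ℝ → ℝ} (h : ∀ k i, F (hσ.eigenvalues k) (hρ.eigenvalues i) =
    G (hσ.eigenvalues k) (hρ.eigenvalues i)) : doubleCFC hσ hρ F = doubleCFC hσ hρ G := by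
  simp only [doubleCFC_apply, h]

lemma doubleCFC_mul (f g : ℝ → ℝ) :
    doubleCFC hσ hρ (fun x y => f x * g y) = cfc f σ * cfc g ρ := by
  rw [cfc_eq_sum_spectralProjection hσ, cfc_eq_sum_spectralProjection hρ,
    Finset.sum_mul_sum, ← Finset.sum_product', doubleCFC_apply]
  simp only [Matrix.smul_mul, Matrix.mul_smul, smul_smul, Finset.univ_product_univ,
    mul_comm]

lemma cfc_mul_doubleCFC (f : ℝ → ℝ) (F : ℝ → ℝ → ℝ) :
    cfc f σ * doubleCFC hσ hρ F = doubleCFC hσ hρ (fun x y => f x * F x y) := by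
  simp only [doubleCFC_apply, Matrix.mul_sum, Matrix.mul_smul, ← Matrix.mul_assoc,
    cfc_mul_spectralProjection, Matrix.smul_mul, smul_smul, mul_comm]

lemma doubleCFC_mul_cfc (F : ℝ → ℝ → ℝ) (g : ℝ → ℝ) :
    doubleCFC hσ hρ F * cfc g ρ = doubleCFC hσ hρ (fun x y => F x y * g y) := by
  simp only [doubleCFC_apply, Matrix.sum_mul, Matrix.smul_mul, Matrix.mul_assoc,
    spectralProjection_mul_cfc, Matrix.mul_smul, smul_smul]

lemma doubleCFC_fst (f : ℝ → ℝ) : doubleCFC hσ hρ (fun x _ => f x) = cfc f σ := by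
  simpa only [mul_one, cfc_one_of_isHermitian hρ, Matrix.mul_one] using
    doubleCFC_mul hσ hρ f fun _ => 1

lemma doubleCFC_snd (g : ℝ → ℝ) : doubleCFC hσ hρ (fun _ y => g y) = cfc g ρ := by
  simpa only [one_mul, cfc_one_of_isHermitian hσ, Matrix.one_mul] using
    doubleCFC_mul hσ hρ (fun _ => 1) g

/-- The `ρ`-weighted overlap of the eigenvectors `p.1` of `σ` and `p.2` of `ρ`. -/
noncomputable def overlapWeight (p : n × n) : ℝ :=
  (spectralProjection hσ p.1 * spectralProjection hρ p.2 * ρ).trace.re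

lemma re_trace_doubleCFC_mul (F : ℝ → ℝ → ℝ) :
    (doubleCFC hσ hρ F * ρ).trace.re = ∑ p : n × n, overlapWeight hσ hρ p *
      F (hσ.eigenvalues p.1) (hρ.eigenvalues p.2) := by
  simp only [doubleCFC_apply, Matrix.sum_mul, trace_sum, Matrix.smul_mul, trace_smul,
    Complex.re_sum, Complex.smul_re, overlapWeight, smul_eq_mul, mul_comm]

lemma sum_overlapWeight : ∑ p, overlapWeight hσ hρ p = ρ.trace.re := by
  have h := re_trace_doubleCFC_mul hσ hρ fun _ _ => 1
  simp only [mul_one] at h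
  rw [← h, doubleCFC_fst hσ hρ fun _ => 1, cfc_one_of_isHermitian hσ, Matrix.one_mul]

end DoubleFunctionalCalculus

/-! ### Monotonicity of the relative entropy -/

section Restriction

variable {m n : Type*} [Fintype m] [DecidableEq m] [Fintype n] [DecidableEq n]

/-- The functional `z ↦ Tr (z τ)` is the restriction of `x ↦ Tr (x ρ)` along `φ`. If `φ` embeds the
observables of a subsystem, this says that `τ` is the marginal of `ρ` on that subsystem. -/
def IsRestriction (φ : Matrix m m ℂ →⋆ₐ[ℂ] Matrix n n ℂ) (ρ : Matrix n n ℂ) (τ : Matrix m m ℂ) :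
    Prop :=
  ∀ z, (φ z * ρ).trace = (z * τ).trace

variable {φ : Matrix m m ℂ →⋆ₐ[ℂ] Matrix n n ℂ} {ρ : Matrix n n ℂ} {τ : Matrix m m ℂ}

lemma starAlgHom_conjTranspose (φ : Matrix m m ℂ →⋆ₐ[ℂ] Matrix n n ℂ) (x : Matrix m m ℂ) :
    φ xᴴ = (φ x)ᴴ :=
  map_star φ x

lemma starAlgHom_posSemidef (φ : Matrix m m ℂ →⋆ₐ[ℂ] Matrix n n ℂ) {x : Matrix m m ℂ}
    (hx : x.PosSemidef) : (φ x).PosSemidef := by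
  rw [← cfc_sqrt_mul_cfc_sqrt hx, map_mul]
  nth_rewrite 1 [← conjTranspose_cfc]
  rw [starAlgHom_conjTranspose]
  exact posSemidef_conjTranspose_mul_self _

lemma IsRestriction.trace_eq (h : IsRestriction φ ρ τ) : ρ.trace = τ.trace := by
  simpa only [map_one, Matrix.one_mul] using h 1

lemma IsRestriction.map_cfc_nonzeroIndicator_mul (h : IsRestriction φ ρ τ) (hρ : ρ.PosSemidef)
    (hτ : τ.PosSemidef) : φ (cfc nonzeroIndicator τ) * ρ = ρ := by
  have kernel : φ (1 - cfc nonzeroIndicator τ) * ρ = 0 := by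
    refine mul_eq_zero_of_trace hρ ?_
    rw [← starAlgHom_conjTranspose, ← map_mul, h, Matrix.mul_assoc, Matrix.sub_mul,
      cfc_nonzeroIndicator_mul_self hτ, Matrix.one_mul, sub_self, Matrix.mul_zero, trace_zero]
  rw [map_sub, map_one, Matrix.sub_mul, Matrix.one_mul, sub_eq_zero] at kernel
  exact kernel.symm

end Restriction

section SylvesterForm

variable {n : Type*} [Fintype n]

lemma re_trace_conjTranspose_mul {M : Matrix n n ℂ} (hM : M.IsHermitian) (X : Matrix n n ℂ) :
    (Xᴴ * M).trace.re = (X * M).trace.re := by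
  rw [← hM.eq, ← conjTranspose_mul, trace_conjTranspose, trace_mul_comm, hM.eq]
  exact Complex.conj_re _

/-- The sesquilinear form of the operator `X ↦ (1 - u) σ X + u X ρ`. -/
noncomputable def sylvesterForm (u : ℝ) (σ ρ X Y : Matrix n n ℂ) : ℂ :=
  (Xᴴ * ((1 - u) • (σ * Y) + u • (Y * ρ))).trace

lemma sylvesterForm_sub_sub (u : ℝ) (σ ρ X Y : Matrix n n ℂ) :
    sylvesterForm u σ ρ (X - Y) (X - Y) = sylvesterForm u σ ρ X X - sylvesterForm u σ ρ X Y -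
      sylvesterForm u σ ρ Y X + sylvesterForm u σ ρ Y Y := by
  simp only [sylvesterForm, conjTranspose_sub, Matrix.sub_mul, Matrix.mul_sub, Matrix.mul_add,
    trace_sub, trace_add, Matrix.mul_smul, trace_smul, smul_sub]
  ring

lemma sylvesterForm_conj {σ ρ : Matrix n n ℂ} (hσ : σ.IsHermitian) (hρ : ρ.IsHermitian) (u : ℝ)
    (X Y : Matrix n n ℂ) : star (sylvesterForm u σ ρ X Y) = sylvesterForm u σ ρ Y X := by
  have left : star (Xᴴ * (σ * Y)).trace = (Yᴴ * (σ * X)).trace := by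
    rw [← trace_conjTranspose, conjTranspose_mul, conjTranspose_mul, conjTranspose_conjTranspose,
      hσ, Matrix.mul_assoc]
  have right : star (Xᴴ * (Y * ρ)).trace = (Yᴴ * (X * ρ)).trace := by
    rw [← trace_conjTranspose, conjTranspose_mul, conjTranspose_mul, conjTranspose_conjTranspose,
      hρ, Matrix.mul_assoc, trace_mul_comm, Matrix.mul_assoc]
  simp only [sylvesterForm, Matrix.mul_add, trace_add, Matrix.mul_smul, trace_smul, star_add,
    star_smul, star_trivial, left, right]

lemma sylvesterForm_self {u : ℝ} (σ ρ X : Matrix n n ℂ) : sylvesterForm u σ ρ X X =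
    (1 - u) • (Xᴴ * σ * X).trace + u • (Xᴴ * X * ρ).trace := by
  simp only [sylvesterForm, Matrix.mul_add, trace_add, Matrix.mul_smul, trace_smul,
    Matrix.mul_assoc]

lemma trace_conjTranspose_mul_mul_nonneg {ρ : Matrix n n ℂ} (hρ : ρ.PosSemidef)
    (X : Matrix n n ℂ) : 0 ≤ (Xᴴ * X * ρ).trace := by
  rw [Matrix.mul_assoc, trace_mul_comm]
  exact (hρ.mul_mul_conjTranspose_same X).trace_nonneg

lemma sylvesterForm_self_nonneg {u : ℝ} (hu : u ∈ Set.Icc (0 : ℝ) 1) {σ ρ : Matrix n n ℂ}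
    (hσ : σ.PosSemidef) (hρ : ρ.PosSemidef) (X : Matrix n n ℂ) : 0 ≤ sylvesterForm u σ ρ X X := by
  rw [sylvesterForm_self]
  exact add_nonneg (smul_nonneg (sub_nonneg.2 hu.2) (hσ.conjTranspose_mul_mul_same X).trace_nonneg)
    (smul_nonneg hu.1 (trace_conjTranspose_mul_mul_nonneg hρ X))

lemma mul_eq_zero_of_sylvesterForm_self_eq_zero {u : ℝ} (hu : u ∈ Set.Ioc (0 : ℝ) 1)
    {σ ρ X : Matrix n n ℂ} (hσ : σ.PosSemidef) (hρ : ρ.PosSemidef)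
    (h : sylvesterForm u σ ρ X X = 0) : X * ρ = 0 := by
  rw [sylvesterForm_self, add_eq_zero_iff_of_nonneg
    (smul_nonneg (sub_nonneg.2 hu.2) (hσ.conjTranspose_mul_mul_same X).trace_nonneg)
    (smul_nonneg hu.1.le (trace_conjTranspose_mul_mul_nonneg hρ X))] at h
  exact mul_eq_zero_of_trace hρ ((smul_eq_zero.1 h.2).resolve_left hu.1.ne')

variable [DecidableEq n]

lemma sylvesterForm_map {m : Type*} [Fintype m] [DecidableEq m]
    {φ : Matrix m m ℂ →⋆ₐ[ℂ] Matrix n n ℂ} {ρ σ : Matrix n n ℂ}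
    {τ ω : Matrix m m ℂ} (hρτ : IsRestriction φ ρ τ) (hσω : IsRestriction φ σ ω) (u : ℝ)
    (x y : Matrix m m ℂ) : sylvesterForm u σ ρ (φ x) (φ y) = sylvesterForm u ω τ x y := by
  have left : ((φ x)ᴴ * (σ * φ y)).trace = (xᴴ * (ω * y)).trace := by
    rw [← starAlgHom_conjTranspose, ← Matrix.mul_assoc, trace_mul_comm, ← Matrix.mul_assoc,
      ← map_mul, hσω, Matrix.mul_assoc, trace_mul_comm, Matrix.mul_assoc]
  have right : ((φ x)ᴴ * (φ y * ρ)).trace = (xᴴ * (y * τ)).trace := by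
    rw [← starAlgHom_conjTranspose, ← Matrix.mul_assoc, ← map_mul, hρτ, Matrix.mul_assoc]
  simp only [sylvesterForm, Matrix.mul_add, trace_add, Matrix.mul_smul, trace_smul, left, right]

lemma sylvester_doubleCFC {σ ρ : Matrix n n ℂ} (hσ : σ.PosSemidef) (hρ : ρ.PosSemidef) {u : ℝ}
    (hu : u ∈ Set.Ioo (0 : ℝ) 1) :
    (1 - u) • (σ * doubleCFC hσ.1 hρ.1 (sylvesterKernel u)) +
      u • (doubleCFC hσ.1 hρ.1 (sylvesterKernel u) * ρ) = ρ := by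
  have left : σ * doubleCFC hσ.1 hρ.1 (sylvesterKernel u) =
      doubleCFC hσ.1 hρ.1 (fun x y => x * sylvesterKernel u x y) := by
    simpa only [cfc_id_of_isHermitian hσ.1] using
      cfc_mul_doubleCFC hσ.1 hρ.1 (fun x => x) (sylvesterKernel u)
  have right : doubleCFC hσ.1 hρ.1 (sylvesterKernel u) * ρ =
      doubleCFC hσ.1 hρ.1 (fun x y => sylvesterKernel u x y * y) := by
    simpa only [cfc_id_of_isHermitian hρ.1] using
      doubleCFC_mul_cfc hσ.1 hρ.1 (sylvesterKernel u) (fun y => y)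
  calc _ = doubleCFC hσ.1 hρ.1 (fun _ y => y) := by
        rw [left, right, ← map_smul, ← map_smul, ← map_add]
        exact doubleCFC_congr _ _ fun k i =>
          sylvesterKernel_spec hu (hσ.eigenvalues_nonneg k) (hρ.eigenvalues_nonneg i)
    _ = ρ := by rw [doubleCFC_snd, cfc_id_of_isHermitian hρ.1]

/- By the Sylvester equations every term of the expanded square is one of the two traces. -/
lemma re_sylvesterForm_sub_self {m : Type*} [Fintype m] [DecidableEq m]
    {φ : Matrix m m ℂ →⋆ₐ[ℂ] Matrix n n ℂ} {ρ σ Z : Matrix n n ℂ}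
    {τ ω z : Matrix m m ℂ} (hρ : ρ.IsHermitian) (hσ : σ.IsHermitian) (hτ : τ.IsHermitian)
    (hρτ : IsRestriction φ ρ τ) (hσω : IsRestriction φ σ ω) {u : ℝ}
    (hZ : (1 - u) • (σ * Z) + u • (Z * ρ) = ρ) (hz : (1 - u) • (ω * z) + u • (z * τ) = τ) :
    (sylvesterForm u σ ρ (φ z - Z) (φ z - Z)).re = (Z * ρ).trace.re - (z * τ).trace.re := by
  have form_Z (X : Matrix n n ℂ) : sylvesterForm u σ ρ X Z = (Xᴴ * ρ).trace := by
    rw [sylvesterForm, hZ]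
  have form_z : sylvesterForm u σ ρ (φ z) (φ z) = (zᴴ * τ).trace := by
    rw [sylvesterForm_map hρτ hσω, sylvesterForm, hz]
  have cross : ((φ z)ᴴ * ρ).trace = (zᴴ * τ).trace := by
    rw [← starAlgHom_conjTranspose, hρτ]
  rw [sylvesterForm_sub_sub, ← sylvesterForm_conj hσ hρ u (φ z) Z, form_Z, form_Z, form_z, cross]
  simp only [Complex.add_re, Complex.sub_re, RCLike.star_def, Complex.conj_re,
    re_trace_conjTranspose_mul hρ, re_trace_conjTranspose_mul hτ]
  ring

end SylvesterForm

section RelativeEntropy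

variable {n : Type*} [Fintype n] [DecidableEq n]

/-- The relative entropy `Tr ρ (log ρ - log σ)` with natural logarithms. It is the usual one only
if the support of `ρ` is contained in that of `σ`, since `Real.log 0 = 0`. -/
noncomputable def relativeEntropy (ρ σ : Matrix n n ℂ) : ℝ :=
  ((cfc Real.log ρ - cfc Real.log σ) * ρ).trace.re

/-- The function `u ↦ ⟨log ((1 - u) L + u R)⟩` whose increment over `[0, 1]` is the relative
entropy, where `L` is left multiplication by `σ` and `R` is right multiplication by `ρ`. -/
noncomputable def relativeEntropyPath {σ ρ : Matrix n n ℂ} (hσ : σ.IsHermitian)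
    (hρ : ρ.IsHermitian) (u : ℝ) : ℝ :=
  (doubleCFC hσ hρ (fun x y => Real.log ((1 - u) * x + u * y)) * ρ).trace.re

variable {σ ρ : Matrix n n ℂ}

lemma relativeEntropyPath_one_sub_zero (hσ : σ.IsHermitian) (hρ : ρ.IsHermitian) :
    relativeEntropyPath hσ hρ 1 - relativeEntropyPath hσ hρ 0 = relativeEntropy ρ σ := by
  simp only [relativeEntropyPath, sub_self, zero_mul, zero_add, sub_zero, one_mul, add_zero,
    doubleCFC_fst, doubleCFC_snd, relativeEntropy, Matrix.sub_mul, trace_sub, Complex.sub_re]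

lemma spectralProjection_mul_eq_zero {l : Type*} (hσ : σ.IsHermitian) {X : Matrix n l ℂ}
    (hX : cfc nonzeroIndicator σ * X = X) {k : n} (hk : hσ.eigenvalues k = 0) :
    spectralProjection hσ k * X = 0 := by
  rw [← hX, ← Matrix.mul_assoc, spectralProjection_mul_cfc, hk, nonzeroIndicator, if_pos rfl,
    zero_smul, Matrix.zero_mul]

lemma eigenvalues_pos_of_overlapWeight_ne_zero (hσ : σ.PosSemidef) (hρ : ρ.PosSemidef)
    (support_le : cfc nonzeroIndicator σ * ρ = ρ) {p : n × n}
    (hp : overlapWeight hσ.1 hρ.1 p ≠ 0) :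
    0 < hσ.1.eigenvalues p.1 ∧ 0 < hρ.1.eigenvalues p.2 := by
  have right := spectralProjection_mul_cfc hρ.1 (fun x => x) p.2
  have left := cfc_mul_spectralProjection hρ.1 (fun x => x) p.2
  rw [cfc_id_of_isHermitian hρ.1] at left right
  refine ⟨(hσ.eigenvalues_nonneg _).lt_of_ne' fun h => hp ?_,
    (hρ.eigenvalues_nonneg _).lt_of_ne' fun h => hp ?_⟩
  · rw [overlapWeight, Matrix.mul_assoc, right, ← left, ← Matrix.mul_assoc,
      spectralProjection_mul_eq_zero hσ.1 support_le h, Matrix.zero_mul, trace_zero,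
      Complex.zero_re]
  · rw [overlapWeight, Matrix.mul_assoc, right, h, zero_smul, Matrix.mul_zero, trace_zero,
      Complex.zero_re]

lemma continuousOn_relativeEntropyPath (hσ : σ.PosSemidef) (hρ : ρ.PosSemidef)
    (support_le : cfc nonzeroIndicator σ * ρ = ρ) :
    ContinuousOn (relativeEntropyPath hσ.1 hρ.1) (Set.Icc 0 1) := by
  unfold relativeEntropyPath
  simp only [re_trace_doubleCFC_mul]
  exact continuousOn_sum_mul_log_mix fun _ =>
    eigenvalues_pos_of_overlapWeight_ne_zero hσ hρ support_le

lemma hasDerivAt_relativeEntropyPath (hσ : σ.PosSemidef) (hρ : ρ.PosSemidef)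
    (support_le : cfc nonzeroIndicator σ * ρ = ρ) {u : ℝ} (hu : u ∈ Set.Ioo (0 : ℝ) 1) :
    HasDerivAt (relativeEntropyPath hσ.1 hρ.1) ((1 - u)⁻¹ *
      ((doubleCFC hσ.1 hρ.1 (sylvesterKernel u) * ρ).trace.re - ρ.trace.re)) u := by
  unfold relativeEntropyPath
  simp only [re_trace_doubleCFC_mul, ← sum_overlapWeight hσ.1 hρ.1]
  exact hasDerivAt_sum_mul_log_mix (fun _ =>
    eigenvalues_pos_of_overlapWeight_ne_zero hσ hρ support_le) hu

end RelativeEntropy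

section Monotonicity

variable {m n : Type*} [Fintype m] [DecidableEq m] [Fintype n] [DecidableEq n]

/-- Positive matrices `ρ` and `σ`, the support of `ρ` being contained in that of `σ`, together with
their restrictions `τ` and `ω` along `φ`. -/
structure IsRestrictedPair (φ : Matrix m m ℂ →⋆ₐ[ℂ] Matrix n n ℂ) (ρ σ : Matrix n n ℂ)
    (τ ω : Matrix m m ℂ) : Prop where
  posSemidef_fst : ρ.PosSemidef
  posSemidef_snd : σ.PosSemidef
  posSemidef_restrict_fst : τ.PosSemidef
  posSemidef_restrict_snd : ω.PosSemidef
  isRestriction_fst : IsRestriction φ ρ τ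
  isRestriction_snd : IsRestriction φ σ ω
  support_le : cfc nonzeroIndicator σ * ρ = ρ

namespace IsRestrictedPair

variable {φ : Matrix m m ℂ →⋆ₐ[ℂ] Matrix n n ℂ} {ρ σ : Matrix n n ℂ} {τ ω : Matrix m m ℂ}

lemma map_support_le (h : IsRestrictedPair φ ρ σ τ ω) : φ (cfc nonzeroIndicator ω) * ρ = ρ := by
  have on_snd : (1 - φ (cfc nonzeroIndicator ω)) * σ = 0 := by
    rw [Matrix.sub_mul, Matrix.one_mul, h.isRestriction_snd.map_cfc_nonzeroIndicator_mul
      h.posSemidef_snd h.posSemidef_restrict_snd, sub_self]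
  have on_support : (1 - φ (cfc nonzeroIndicator ω)) * cfc nonzeroIndicator σ = 0 := by
    rw [← cfc_sqrt_mul_cfc_invSqrt h.posSemidef_snd, ← Matrix.mul_assoc,
      (mul_cfc_sqrt_eq_zero_iff h.posSemidef_snd).2 on_snd, Matrix.zero_mul]
  have on_fst : (1 - φ (cfc nonzeroIndicator ω)) * ρ = 0 := by
    rw [← h.support_le, ← Matrix.mul_assoc, on_support, Matrix.zero_mul]
  rw [Matrix.sub_mul, Matrix.one_mul, sub_eq_zero] at on_fst
  exact on_fst.symm

lemma restrict_support_le (h : IsRestrictedPair φ ρ σ τ ω) : cfc nonzeroIndicator ω * τ = τ := by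
  have kernel : (1 - cfc nonzeroIndicator ω) * τ = 0 := by
    refine mul_eq_zero_of_trace h.posSemidef_restrict_fst ?_
    rw [← h.isRestriction_fst, map_mul, Matrix.mul_assoc, map_sub, map_one, Matrix.sub_mul,
      h.map_support_le, Matrix.one_mul, sub_self, Matrix.mul_zero, trace_zero]
  rw [Matrix.sub_mul, Matrix.one_mul, sub_eq_zero] at kernel
  exact kernel.symm

/-- The solution of `(1 - u) σ Z + u Z ρ = ρ`. -/
noncomputable def solution (h : IsRestrictedPair φ ρ σ τ ω) (u : ℝ) : Matrix n n ℂ :=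
  doubleCFC h.posSemidef_snd.1 h.posSemidef_fst.1 (sylvesterKernel u)

/-- The solution of `(1 - u) ω z + u z τ = τ`. -/
noncomputable def restrictSolution (h : IsRestrictedPair φ ρ σ τ ω) (u : ℝ) : Matrix m m ℂ :=
  doubleCFC h.posSemidef_restrict_snd.1 h.posSemidef_restrict_fst.1 (sylvesterKernel u)

lemma re_sylvesterForm_solution (h : IsRestrictedPair φ ρ σ τ ω) {u : ℝ}
    (hu : u ∈ Set.Ioo (0 : ℝ) 1) :
    (sylvesterForm u σ ρ (φ (h.restrictSolution u) - h.solution u)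
      (φ (h.restrictSolution u) - h.solution u)).re =
      (h.solution u * ρ).trace.re - (h.restrictSolution u * τ).trace.re :=
  re_sylvesterForm_sub_self h.posSemidef_fst.1 h.posSemidef_snd.1 h.posSemidef_restrict_fst.1
    h.isRestriction_fst h.isRestriction_snd
    (sylvester_doubleCFC h.posSemidef_snd h.posSemidef_fst hu)
    (sylvester_doubleCFC h.posSemidef_restrict_snd h.posSemidef_restrict_fst hu)

lemma trace_restrictSolution_le (h : IsRestrictedPair φ ρ σ τ ω) {u : ℝ}
    (hu : u ∈ Set.Ioo (0 : ℝ) 1) :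
    (h.restrictSolution u * τ).trace.re ≤ (h.solution u * ρ).trace.re := by
  rw [← sub_nonneg, ← h.re_sylvesterForm_solution hu]
  exact (Complex.nonneg_iff.1 (sylvesterForm_self_nonneg ⟨hu.1.le, hu.2.le⟩ h.posSemidef_snd
    h.posSemidef_fst _)).1

lemma map_restrictSolution_mul (h : IsRestrictedPair φ ρ σ τ ω) {u : ℝ}
    (hu : u ∈ Set.Ioo (0 : ℝ) 1)
    (trace_eq : (h.restrictSolution u * τ).trace.re = (h.solution u * ρ).trace.re) :
    φ (h.restrictSolution u) * ρ = h.solution u * ρ := by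
  have form_nonneg := sylvesterForm_self_nonneg ⟨hu.1.le, hu.2.le⟩ h.posSemidef_snd
    h.posSemidef_fst (φ (h.restrictSolution u) - h.solution u)
  have form_re := h.re_sylvesterForm_solution hu
  rw [trace_eq, sub_self] at form_re
  have form_eq_zero := Complex.ext (w := 0) form_re (Complex.nonneg_iff.1 form_nonneg).2.symm
  rw [← sub_eq_zero, ← Matrix.sub_mul]
  exact mul_eq_zero_of_sylvesterForm_self_eq_zero ⟨hu.1, hu.2.le⟩ h.posSemidef_snd
    h.posSemidef_fst form_eq_zero

/-- The relative entropy lost along the path from `u = 0`, up to a constant. -/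
noncomputable def entropyGap (h : IsRestrictedPair φ ρ σ τ ω) (u : ℝ) : ℝ :=
  relativeEntropyPath h.posSemidef_snd.1 h.posSemidef_fst.1 u -
    relativeEntropyPath h.posSemidef_restrict_snd.1 h.posSemidef_restrict_fst.1 u

lemma entropyGap_one_sub_zero (h : IsRestrictedPair φ ρ σ τ ω) :
    h.entropyGap 1 - h.entropyGap 0 = relativeEntropy ρ σ - relativeEntropy τ ω := by
  rw [← relativeEntropyPath_one_sub_zero h.posSemidef_snd.1 h.posSemidef_fst.1,
    ← relativeEntropyPath_one_sub_zero h.posSemidef_restrict_snd.1 h.posSemidef_restrict_fst.1,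
    entropyGap, entropyGap]
  ring

lemma continuousOn_entropyGap (h : IsRestrictedPair φ ρ σ τ ω) :
    ContinuousOn h.entropyGap (Set.Icc 0 1) :=
  (continuousOn_relativeEntropyPath h.posSemidef_snd h.posSemidef_fst h.support_le).sub
    (continuousOn_relativeEntropyPath h.posSemidef_restrict_snd h.posSemidef_restrict_fst
      h.restrict_support_le)

lemma hasDerivAt_entropyGap (h : IsRestrictedPair φ ρ σ τ ω) {u : ℝ}
    (hu : u ∈ Set.Ioo (0 : ℝ) 1) :
    HasDerivAt h.entropyGap ((1 - u)⁻¹ *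
      ((h.solution u * ρ).trace.re - (h.restrictSolution u * τ).trace.re)) u := by
  refine HasDerivAt.congr_deriv
    ((hasDerivAt_relativeEntropyPath h.posSemidef_snd h.posSemidef_fst h.support_le hu).sub
    (hasDerivAt_relativeEntropyPath h.posSemidef_restrict_snd h.posSemidef_restrict_fst
      h.restrict_support_le hu)) ?_
  rw [h.isRestriction_fst.trace_eq, solution, restrictSolution]
  ring

lemma entropyGap_deriv_nonneg (h : IsRestrictedPair φ ρ σ τ ω) {u : ℝ}
    (hu : u ∈ Set.Ioo (0 : ℝ) 1) :
    0 ≤ (1 - u)⁻¹ * ((h.solution u * ρ).trace.re - (h.restrictSolution u * τ).trace.re) :=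
  mul_nonneg (inv_nonneg.2 (sub_nonneg.2 hu.2.le))
    (sub_nonneg.2 (h.trace_restrictSolution_le hu))

theorem relativeEntropy_restrict_le (h : IsRestrictedPair φ ρ σ τ ω) :
    relativeEntropy τ ω ≤ relativeEntropy ρ σ := by
  rw [← sub_nonneg, ← h.entropyGap_one_sub_zero, sub_nonneg]
  exact monotoneOn_Icc_of_hasDerivAt_nonneg h.continuousOn_entropyGap
    (fun _ => h.hasDerivAt_entropyGap) (fun _ => h.entropyGap_deriv_nonneg)
    (Set.left_mem_Icc.2 zero_le_one) (Set.right_mem_Icc.2 zero_le_one) zero_le_one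

lemma map_restrictSolution_mul_of_relativeEntropy_eq (h : IsRestrictedPair φ ρ σ τ ω)
    (entropy_eq : relativeEntropy τ ω = relativeEntropy ρ σ) {u : ℝ}
    (hu : u ∈ Set.Ioo (0 : ℝ) 1) : φ (h.restrictSolution u) * ρ = h.solution u * ρ := by
  have endpoints := h.entropyGap_one_sub_zero
  rw [entropy_eq, sub_self, sub_eq_zero] at endpoints
  have deriv_eq_zero := hasDerivAt_eq_zero_of_endpoints_eq h.continuousOn_entropyGap
    (fun _ => h.hasDerivAt_entropyGap) (fun _ => h.entropyGap_deriv_nonneg) endpoints.symm u hu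
  refine h.map_restrictSolution_mul hu (sub_eq_zero.1 ?_).symm
  exact (mul_eq_zero.1 deriv_eq_zero).resolve_left (inv_ne_zero (sub_ne_zero.2 hu.2.ne'))

lemma map_cfc_invSqrt_mul_cfc_sqrt_mul (h : IsRestrictedPair φ ρ σ τ ω)
    (entropy_eq : relativeEntropy τ ω = relativeEntropy ρ σ) :
    φ (cfc invSqrt ω * cfc Real.sqrt τ) * ρ = cfc invSqrt σ * cfc Real.sqrt ρ * ρ := by
  classical
  let P : Finset (ℝ × ℝ) :=
    Finset.univ.image (fun p : n × n => (h.posSemidef_snd.1.eigenvalues p.1,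
      h.posSemidef_fst.1.eigenvalues p.2)) ∪
    Finset.univ.image (fun p : m × m => (h.posSemidef_restrict_snd.1.eigenvalues p.1,
      h.posSemidef_restrict_fst.1.eigenvalues p.2))
  obtain ⟨N, u, c, hu, expansion⟩ := exists_invSqrt_mul_sqrt_eq_sum_sylvesterKernel P (by
    simp only [P, Finset.mem_union, Finset.mem_image, Finset.mem_univ, true_and]
    rintro _ (⟨p, rfl⟩ | ⟨p, rfl⟩)
    · exact ⟨h.posSemidef_snd.eigenvalues_nonneg _, h.posSemidef_fst.eigenvalues_nonneg _⟩
    · exact ⟨h.posSemidef_restrict_snd.eigenvalues_nonneg _,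
        h.posSemidef_restrict_fst.eigenvalues_nonneg _⟩)
  have sqrt_eq : cfc invSqrt σ * cfc Real.sqrt ρ =
      ∑ j ∈ Finset.range N, c j • h.solution (u j) := by
    simp only [solution, ← map_smul, ← map_sum,
      ← doubleCFC_mul h.posSemidef_snd.1 h.posSemidef_fst.1]
    refine doubleCFC_congr _ _ fun k i => ?_
    simp only [Finset.sum_apply, Pi.smul_apply, smul_eq_mul]
    exact expansion _ (Finset.mem_union_left _ (Finset.mem_image_of_mem _ (Finset.mem_univ (k, i))))
  have restrict_sqrt_eq :
      cfc invSqrt ω * cfc Real.sqrt τ = ∑ j ∈ Finset.range N, c j • h.restrictSolution (u j) := by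
    simp only [restrictSolution, ← map_smul, ← map_sum,
      ← doubleCFC_mul h.posSemidef_restrict_snd.1 h.posSemidef_restrict_fst.1]
    refine doubleCFC_congr _ _ fun k i => ?_
    simp only [Finset.sum_apply, Pi.smul_apply, smul_eq_mul]
    exact expansion _ (Finset.mem_union_right _
      (Finset.mem_image_of_mem _ (Finset.mem_univ (k, i))))
  rw [sqrt_eq, restrict_sqrt_eq, map_sum, Matrix.sum_mul, Matrix.sum_mul]
  refine Finset.sum_congr rfl fun j _ => ?_
  rw [Matrix.smul_mul, ← h.map_restrictSolution_mul_of_relativeEntropy_eq entropy_eq (hu j),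
    ← Complex.coe_smul, map_smul, Matrix.smul_mul, Complex.coe_smul]

end IsRestrictedPair

end Monotonicity

section SquareRoot

lemma eq_of_mul_self_eq_of_trace_eq {n : Type*} [Fintype n] {K H : Matrix n n ℂ}
    (hH : H.IsHermitian) (hK : K * H = H * H) (trace_eq : (Kᴴ * K).trace = (H * H).trace) :
    K = H := by
  have hK' : H * Kᴴ = H * H := by
    rw [← hH.eq, ← conjTranspose_mul, hH.eq, hK, conjTranspose_mul, hH.eq]
  rw [← sub_eq_zero, ← trace_conjTranspose_mul_self_eq_zero_iff, conjTranspose_sub, hH.eq,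
    Matrix.sub_mul, Matrix.mul_sub, Matrix.mul_sub, trace_sub, trace_sub, trace_sub, trace_eq,
    trace_mul_comm Kᴴ H, hK', trace_mul_comm H K, hK]
  ring

variable {m n : Type*} [Fintype m] [DecidableEq m] [Fintype n] [DecidableEq n]
  {φ : Matrix m m ℂ →⋆ₐ[ℂ] Matrix n n ℂ} {ρ σ : Matrix n n ℂ} {τ ω : Matrix m m ℂ}

lemma mul_cfc_sqrt_eq_of_mul_eq {P : Matrix n n ℂ} (hρ : ρ.PosSemidef) (h : P * ρ = ρ) :
    P * cfc Real.sqrt ρ = cfc Real.sqrt ρ := by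
  have kernel := (mul_cfc_sqrt_eq_zero_iff (X := P - 1) hρ).2
    (by rw [Matrix.sub_mul, h, Matrix.one_mul, sub_self])
  rwa [Matrix.sub_mul, Matrix.one_mul, sub_eq_zero] at kernel

lemma IsRestriction.trace_cfc_sqrt_mul_map (h : IsRestriction φ σ ω) (hσ : σ.PosSemidef)
    (hω : ω.PosSemidef) (z : Matrix m m ℂ) :
    ((cfc Real.sqrt σ * φ z)ᴴ * (cfc Real.sqrt σ * φ z)).trace =
      ((cfc Real.sqrt ω * z)ᴴ * (cfc Real.sqrt ω * z)).trace := by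
  rw [trace_mul_comm, trace_mul_comm (cfc Real.sqrt ω * z)ᴴ, conjTranspose_mul, conjTranspose_mul,
    conjTranspose_cfc, conjTranspose_cfc, ← Matrix.mul_assoc, ← Matrix.mul_assoc, trace_mul_comm,
    trace_mul_comm (_ * _) (cfc Real.sqrt ω)]
  simp only [← Matrix.mul_assoc]
  rw [cfc_sqrt_mul_cfc_sqrt hσ, cfc_sqrt_mul_cfc_sqrt hω, Matrix.mul_assoc, Matrix.mul_assoc,
    trace_mul_comm, trace_mul_comm ω, ← h, map_mul, starAlgHom_conjTranspose]

/- Both sides agree on the support of `ρ`, and they have the same Hilbert–Schmidt norm. -/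
theorem IsRestrictedPair.cfc_sqrt_mul_map (h : IsRestrictedPair φ ρ σ τ ω)
    (entropy_eq : relativeEntropy τ ω = relativeEntropy ρ σ) :
    cfc Real.sqrt σ * φ (cfc invSqrt ω * cfc Real.sqrt τ) = cfc Real.sqrt ρ := by
  refine eq_of_mul_self_eq_of_trace_eq (conjTranspose_cfc _ _) ?_ ?_
  · rw [← sub_eq_zero, ← Matrix.sub_mul, mul_cfc_sqrt_eq_zero_iff h.posSemidef_fst, Matrix.sub_mul,
      Matrix.mul_assoc, h.map_cfc_invSqrt_mul_cfc_sqrt_mul entropy_eq, ← Matrix.mul_assoc,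
      ← Matrix.mul_assoc, cfc_sqrt_mul_cfc_invSqrt h.posSemidef_snd,
      mul_cfc_sqrt_eq_of_mul_eq h.posSemidef_fst h.support_le, sub_self]
  · rw [h.isRestriction_snd.trace_cfc_sqrt_mul_map h.posSemidef_snd h.posSemidef_restrict_snd,
      ← Matrix.mul_assoc (cfc Real.sqrt ω), cfc_sqrt_mul_cfc_invSqrt h.posSemidef_restrict_snd,
      mul_cfc_sqrt_eq_of_mul_eq h.posSemidef_restrict_fst h.restrict_support_le, conjTranspose_cfc,
      cfc_sqrt_mul_cfc_sqrt h.posSemidef_restrict_fst, cfc_sqrt_mul_cfc_sqrt h.posSemidef_fst,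
      h.isRestriction_fst.trace_eq]

end SquareRoot

/-! ### Strong subadditivity and its equality case -/

section StrongSubadditivity

variable {l m n q : Type*} [Fintype l] [DecidableEq l] [Fintype m] [DecidableEq m]
  [Fintype n] [DecidableEq n] [Fintype q] [DecidableEq q]

lemma IsRestriction.relativeEntropy_map {ψ : Matrix l l ℂ →⋆ₐ[ℂ] Matrix n n ℂ}
    {ρ : Matrix n n ℂ} {κ : Matrix l l ℂ} (h : IsRestriction ψ ρ κ) (hρ : ρ.IsHermitian)
    (hκ : κ.IsHermitian) : relativeEntropy ρ (ψ κ) = natEntropy κ - natEntropy ρ := by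
  rw [relativeEntropy, Matrix.sub_mul, trace_sub, ← map_cfc_matrix ψ _ hκ, h, trace_mul_comm,
    trace_mul_cfc_log hρ, trace_mul_comm, trace_mul_cfc_log hκ]
  simp only [Complex.sub_re, Complex.neg_re, Complex.ofReal_re]
  ring

/-- A positive matrix `ρ` on `XYZ` with its marginals `τ` on `XY`, `κ` on `YZ` and `η` on `Y`, where
`φ : XY → XYZ`, `ψ : YZ → XYZ` and `χ : Y → XY` embed the observables. -/
structure IsMarginalSquare (φ : Matrix m m ℂ →⋆ₐ[ℂ] Matrix n n ℂ)
    (ψ : Matrix l l ℂ →⋆ₐ[ℂ] Matrix n n ℂ) (χ : Matrix q q ℂ →⋆ₐ[ℂ] Matrix m m ℂ)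
    (ρ : Matrix n n ℂ) (τ : Matrix m m ℂ) (κ : Matrix l l ℂ) (η : Matrix q q ℂ) : Prop where
  posSemidef : ρ.PosSemidef
  posSemidef_left : τ.PosSemidef
  posSemidef_right : κ.PosSemidef
  posSemidef_middle : η.PosSemidef
  isRestriction_left : IsRestriction φ ρ τ
  isRestriction_right : IsRestriction ψ ρ κ
  isRestriction_middle : IsRestriction χ τ η
  isRestriction_map : IsRestriction φ (ψ κ) (χ η)

namespace IsMarginalSquare

variable {φ : Matrix m m ℂ →⋆ₐ[ℂ] Matrix n n ℂ} {ψ : Matrix l l ℂ →⋆ₐ[ℂ] Matrix n n ℂ}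
  {χ : Matrix q q ℂ →⋆ₐ[ℂ] Matrix m m ℂ} {ρ : Matrix n n ℂ} {τ : Matrix m m ℂ}
  {κ : Matrix l l ℂ} {η : Matrix q q ℂ}

lemma isRestrictedPair (h : IsMarginalSquare φ ψ χ ρ τ κ η) :
    IsRestrictedPair φ ρ (ψ κ) τ (χ η) where
  posSemidef_fst := h.posSemidef
  posSemidef_snd := starAlgHom_posSemidef ψ h.posSemidef_right
  posSemidef_restrict_fst := h.posSemidef_left
  posSemidef_restrict_snd := starAlgHom_posSemidef χ h.posSemidef_middle
  isRestriction_fst := h.isRestriction_left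
  isRestriction_snd := h.isRestriction_map
  support_le := by
    rw [← map_cfc_matrix ψ _ h.posSemidef_right.1,
      h.isRestriction_right.map_cfc_nonzeroIndicator_mul h.posSemidef h.posSemidef_right]

theorem natEntropy_add_le (h : IsMarginalSquare φ ψ χ ρ τ κ η) :
    natEntropy η + natEntropy ρ ≤ natEntropy τ + natEntropy κ := by
  have mono := h.isRestrictedPair.relativeEntropy_restrict_le
  rw [h.isRestriction_right.relativeEntropy_map h.posSemidef.1 h.posSemidef_right.1,
    h.isRestriction_middle.relativeEntropy_map h.posSemidef_left.1 h.posSemidef_middle.1] at mono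
  linarith

theorem cfc_sqrt_eq (h : IsMarginalSquare φ ψ χ ρ τ κ η)
    (entropy_eq : natEntropy η + natEntropy ρ = natEntropy τ + natEntropy κ) :
    ψ (cfc Real.sqrt κ) * φ (χ (cfc invSqrt η) * cfc Real.sqrt τ) = cfc Real.sqrt ρ := by
  have recovery := h.isRestrictedPair.cfc_sqrt_mul_map (by
    rw [h.isRestriction_right.relativeEntropy_map h.posSemidef.1 h.posSemidef_right.1,
      h.isRestriction_middle.relativeEntropy_map h.posSemidef_left.1 h.posSemidef_middle.1]
    linarith)
  rwa [← map_cfc_matrix ψ _ h.posSemidef_right.1, ← map_cfc_matrix χ _ h.posSemidef_middle.1]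
    at recovery

end IsMarginalSquare

end StrongSubadditivity

/-! ### Simultaneous diagonalization -/

section SimultaneousDiagonalization

variable {ι n : Type*} [Fintype n]

lemma exists_orthonormalBasis_apply_eq_smul {E : Type*} [NormedAddCommGroup E]
    [InnerProductSpace ℂ E] [FiniteDimensional ℂ E] (hn : Module.finrank ℂ E = Fintype.card n)
    {T : ι → E →ₗ[ℂ] E} (symmetric : ∀ i, (T i).IsSymmetric)
    (commute : Pairwise (Function.onFun Commute T)) :
    ∃ (b : OrthonormalBasis n ℂ E) (γ : ι → n → ℂ), ∀ i x, T i (b x) = γ i x • b x := by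
  classical
  have orthogonal := LinearMap.IsSymmetric.orthogonalFamily_iInf_eigenspaces symmetric
  have internal := DirectSum.isInternal_ne_bot_iff.2
    (LinearMap.IsSymmetric.directSum_isInternal_of_pairwise_commute symmetric commute)
  have : Finite {γ : ι → ℂ // (⨅ j, Module.End.eigenspace (T j) (γ j)) ≠ ⊥} :=
    (WellFoundedGT.finite_ne_bot_of_iSupIndep orthogonal.independent).to_subtype
  have : Fintype {γ : ι → ℂ // (⨅ j, Module.End.eigenspace (T j) (γ j)) ≠ ⊥} :=
    Fintype.ofFinite _
  have orthogonal_ne_bot := orthogonal.comp (Subtype.val_injective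
    (p := fun γ : ι → ℂ => (⨅ j, Module.End.eigenspace (T j) (γ j)) ≠ ⊥))
  refine ⟨(internal.subordinateOrthonormalBasis hn orthogonal_ne_bot).reindex
    (Fintype.equivFin n).symm, fun i x => (internal.subordinateOrthonormalBasisIndex hn
      (Fintype.equivFin n x) orthogonal_ne_bot).1 i, fun i x => ?_⟩
  rw [OrthonormalBasis.reindex_apply, Equiv.symm_symm]
  exact Module.End.mem_eigenspace_iff.1 ((Submodule.mem_iInf _).1
    (internal.subordinateOrthonormalBasis_subordinate hn _ orthogonal_ne_bot) i)

variable [DecidableEq n]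

/-- The star-algebra embedding `d ↦ V diag(d) Vᴴ` of the diagonal matrices in the orthonormal basis
formed by the columns of `V`. -/
noncomputable def unitaryDiagonal (V : unitaryGroup n ℂ) : (n → ℂ) →⋆ₐ[ℂ] Matrix n n ℂ :=
  StarAlgHom.comp (Unitary.conjStarAlgAut ℂ (Matrix n n ℂ) V : Matrix n n ℂ →⋆ₐ[ℂ] Matrix n n ℂ)
    { diagonalAlgHom ℂ with map_star' := fun d => (diagonal_conjTranspose d).symm }

lemma unitaryDiagonal_apply (V : unitaryGroup n ℂ) (d : n → ℂ) :
    unitaryDiagonal V d = (V : Matrix n n ℂ) * diagonal d * (V : Matrix n n ℂ)ᴴ :=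
  rfl

lemma unitaryDiagonal_injective (V : unitaryGroup n ℂ) :
    Function.Injective (unitaryDiagonal V) := fun _ _ h =>
  diagonal_injective ((Unitary.conjStarAlgAut ℂ (Matrix n n ℂ) V).injective h)

lemma trace_unitaryDiagonal (V : unitaryGroup n ℂ) (d : n → ℂ) :
    (unitaryDiagonal V d).trace = ∑ i, d i := by
  rw [unitaryDiagonal_apply, trace_mul_cycle, ← star_eq_conjTranspose, Unitary.coe_star_mul_self,
    Matrix.one_mul, trace_diagonal]

lemma exists_unitaryDiagonal_of_isHermitian {H : ι → Matrix n n ℂ}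
    (hermitian : ∀ i, (H i).IsHermitian) (commute : ∀ i j, H i * H j = H j * H i) :
    ∃ (V : unitaryGroup n ℂ) (d : ι → n → ℂ), ∀ i, H i = unitaryDiagonal V (d i) := by
  obtain ⟨b, γ, hγ⟩ := exists_orthonormalBasis_apply_eq_smul (n := n)
    (T := fun i => (H i).toEuclideanLin) (by simp)
    (fun i => isSymmetric_toEuclideanLin_iff.2 (hermitian i)) fun i j _ => by
      refine LinearMap.ext fun v => ?_
      simp only [Module.End.mul_apply, toLpLin_apply, mulVec_mulVec, commute i j]
  let V : unitaryGroup n ℂ := ⟨(EuclideanSpace.basisFun n ℂ).toBasis.toMatrix b,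
    (EuclideanSpace.basisFun n ℂ).toMatrix_orthonormalBasis_mem_unitary b⟩
  refine ⟨V, γ, fun i => ?_⟩
  have eigenvectors : H i * (V : Matrix n n ℂ) = V * diagonal (γ i) := by
    ext k x
    rw [mul_diagonal, mul_comm]
    exact congrArg (fun v : EuclideanSpace ℂ n => v k) (hγ i x)
  rw [unitaryDiagonal_apply, ← eigenvectors, Matrix.mul_assoc, ← star_eq_conjTranspose,
    mem_unitaryGroup_iff.1 V.2, Matrix.mul_one]

lemma exists_unitaryDiagonal {M : ι → Matrix n n ℂ} (commute : ∀ i j, M i * M j = M j * M i)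
    (normal : ∀ i j, M i * (M j)ᴴ = (M j)ᴴ * M i) :
    ∃ (V : unitaryGroup n ℂ) (d : ι → n → ℂ), ∀ i, M i = unitaryDiagonal V (d i) := by
  have commute_conjTranspose (i j) : (M i)ᴴ * (M j)ᴴ = (M j)ᴴ * (M i)ᴴ := by
    rw [← conjTranspose_mul, ← conjTranspose_mul, commute]
  obtain ⟨V, d, hd⟩ := exists_unitaryDiagonal_of_isHermitian (H := Sum.elim
      (fun i => M i + (M i)ᴴ) (fun i => Complex.I • (M i - (M i)ᴴ)))
    (by
      rintro (i | i)
      · simp [IsHermitian, add_comm]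
      · simp only [IsHermitian, Sum.elim_inr, conjTranspose_smul, conjTranspose_sub,
          conjTranspose_conjTranspose, RCLike.star_def, Complex.conj_I]
        module)
    (by
      rintro (i | i) (j | j) <;>
      simp only [Sum.elim_inl, Sum.elim_inr, Matrix.smul_mul, Matrix.mul_smul, Matrix.add_mul,
        Matrix.mul_add, Matrix.sub_mul, Matrix.mul_sub, commute i j, normal i j, normal j i,
        commute_conjTranspose i j] <;>
      module)
  refine ⟨V, fun i => (1 / 2 : ℂ) • (d (.inl i) - Complex.I • d (.inr i)), fun i => ?_⟩
  have real_part := hd (.inl i)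
  have imaginary_part := hd (.inr i)
  rw [Sum.elim_inl] at real_part
  rw [Sum.elim_inr] at imaginary_part
  rw [map_smul, map_sub, map_smul, ← real_part, ← imaginary_part, smul_smul, Complex.I_mul_I]
  module

end SimultaneousDiagonalization

/-! ### Matrices acting like commuting observables on a vector -/

section DoubleMarkov

variable {n q Z : Type*} [Fintype n] [DecidableEq n] [Fintype q] [DecidableEq q]
  {β : Matrix q q ℂ →⋆ₐ[ℂ] Matrix n n ℂ} {G : Matrix n n ℂ} {η : Matrix q q ℂ}

lemma IsRestriction.map_mul_eq_zero_iff (h : IsRestriction β (G * Gᴴ) η) (hη : η.PosSemidef)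
    {X : Matrix q q ℂ} : β X * G = 0 ↔ X * η = 0 := by
  have trace_eq : ((β X * G)ᴴ * (β X * G)).trace = (Xᴴ * X * η).trace := by
    rw [← h, map_mul, starAlgHom_conjTranspose, conjTranspose_mul, Matrix.mul_assoc,
      trace_mul_comm]
    simp only [Matrix.mul_assoc]
  rw [← trace_conjTranspose_mul_self_eq_zero_iff, trace_eq]
  refine ⟨mul_eq_zero_of_trace hη, fun hX => ?_⟩
  rw [Matrix.mul_assoc, hX, Matrix.mul_zero, trace_zero]

lemma mul_cfc_nonzeroIndicator_eq_zero (hη : η.PosSemidef) {X : Matrix q q ℂ}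
    (h : X * cfc Real.sqrt η = 0) : X * cfc nonzeroIndicator η = 0 := by
  rw [← cfc_sqrt_mul_cfc_invSqrt hη, ← Matrix.mul_assoc, h, Matrix.zero_mul]

lemma conjTranspose_mul_eq_of_mul_eq {p : Type*} [Fintype p] {a b h : Matrix p p ℂ}
    (ha : a * aᴴ = aᴴ * a) (hb : b * bᴴ = bᴴ * b) (semiconj : a * h = h * b) :
    aᴴ * h = h * bᴴ := by
  classical
  open scoped Matrix.Norms.L2Operator in
  exact (SemiconjBy.star_right (x := h) ⟨hb.symm⟩ ⟨ha.symm⟩ semiconj.symm).eq.symm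

/- Replacing `G` by `√η` and `β X` by `X` preserves the Hilbert–Schmidt inner products between the
two sides, and it turns them into equal matrices. -/
lemma map_conjTranspose_mul_eq {M M' : Matrix q q ℂ} (hG : G.IsHermitian)
    (restrict : IsRestriction β (G * G) η) (hη : η.PosSemidef)
    (map_mul_eq : β M * G = G * β M'ᴴ) (mul_sqrt_eq : M * cfc Real.sqrt η = cfc Real.sqrt η * M'ᴴ)
    (support : M * cfc nonzeroIndicator η = M) :
    β Mᴴ * G = G * β (cfc invSqrt η * Mᴴ * cfc Real.sqrt η) := by
  set h := cfc Real.sqrt η with h_def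
  set N := cfc invSqrt η * Mᴴ * h with N_def
  have conj_h : hᴴ = h := conjTranspose_cfc _ _
  have h_mul_N : h * N = Mᴴ * h := by
    rw [N_def, ← Matrix.mul_assoc, ← Matrix.mul_assoc, h_def, cfc_sqrt_mul_cfc_invSqrt hη,
      ← conjTranspose_cfc nonzeroIndicator η, ← conjTranspose_mul, support]
  have trace_map (X : Matrix q q ℂ) : (G * (G * β X)).trace = (h * (h * X)).trace := by
    rw [← Matrix.mul_assoc, trace_mul_comm, restrict, trace_mul_comm, ← Matrix.mul_assoc h,
      cfc_sqrt_mul_cfc_sqrt hη]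
  have left_left : ((β Mᴴ * G)ᴴ * (β Mᴴ * G)).trace = ((Mᴴ * h)ᴴ * (Mᴴ * h)).trace := by
    rw [conjTranspose_mul, conjTranspose_mul, hG.eq, conj_h, ← starAlgHom_conjTranspose,
      ← Matrix.mul_assoc, ← Matrix.mul_assoc, trace_mul_comm, trace_mul_comm _ h,
      Matrix.mul_assoc G, Matrix.mul_assoc h, ← map_mul, trace_map]
  have left_right : ((β Mᴴ * G)ᴴ * (G * β N)).trace = ((Mᴴ * h)ᴴ * (h * N)).trace := by
    rw [conjTranspose_mul, conjTranspose_mul, hG.eq, conj_h, ← starAlgHom_conjTranspose,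
      conjTranspose_conjTranspose, Matrix.mul_assoc, ← Matrix.mul_assoc (β M), map_mul_eq,
      Matrix.mul_assoc, ← map_mul, trace_map, Matrix.mul_assoc h, ← Matrix.mul_assoc M, mul_sqrt_eq,
      Matrix.mul_assoc h]
  have right_left : ((G * β N)ᴴ * (β Mᴴ * G)).trace = ((h * N)ᴴ * (Mᴴ * h)).trace := by
    rw [← conjTranspose_conjTranspose (β Mᴴ * G), ← conjTranspose_mul, trace_conjTranspose,
      left_right, ← trace_conjTranspose, conjTranspose_mul, conjTranspose_conjTranspose]
  have right_right : ((G * β N)ᴴ * (G * β N)).trace = ((h * N)ᴴ * (h * N)).trace := by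
    rw [conjTranspose_mul, conjTranspose_mul, hG.eq, conj_h, ← starAlgHom_conjTranspose,
      Matrix.mul_assoc, Matrix.mul_assoc, trace_mul_comm, trace_mul_comm Nᴴ]
    simp only [Matrix.mul_assoc]
    rw [← map_mul, trace_map]
  rw [← sub_eq_zero, ← trace_conjTranspose_mul_self_eq_zero_iff, conjTranspose_sub, Matrix.sub_mul,
    Matrix.mul_sub, Matrix.mul_sub, trace_sub, trace_sub, trace_sub, left_left, left_right,
    right_left, right_right, h_mul_N]
  ring

/-- The matrices `M k l` on `Y` act on the vector `G` of `XY`, whose `Y`-marginal is `η`, like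
matrices `y k l` that commute with all of `Y`, and taking adjoints swaps `k` and `l`. For a state on
`XYZ` which is Markov in the orders `X – Y – Z` and `Y – X – Z`, this holds when `G` is the square
root of the `XY`-marginal and the `M k l` are the blocks of `√ρ^{YZ} (ρ^Y)^(-1/2)`. -/
structure IsDoubleMarkov (β : Matrix q q ℂ →⋆ₐ[ℂ] Matrix n n ℂ) (G : Matrix n n ℂ)
    (η : Matrix q q ℂ) (M : Z → Z → Matrix q q ℂ) (y : Z → Z → Matrix n n ℂ) : Prop where
  isHermitian : G.IsHermitian
  posSemidef : η.PosSemidef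
  isRestriction : IsRestriction β (G * G) η
  support_mul (k l : Z) : cfc nonzeroIndicator η * M k l = M k l
  mul_support (k l : Z) : M k l * cfc nonzeroIndicator η = M k l
  mul_cfc_sqrt (k l : Z) : M k l * cfc Real.sqrt η = cfc Real.sqrt η * (M l k)ᴴ
  mul_map (k l : Z) (x : Matrix q q ℂ) : y k l * β x = β x * y k l
  map_mul_eq (k l : Z) : β (M k l) * G = y k l * G
  conjTranspose_mul (k l : Z) : (y k l * G)ᴴ = y l k * G

namespace IsDoubleMarkov

variable {M : Z → Z → Matrix q q ℂ} {y : Z → Z → Matrix n n ℂ}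

lemma conjTranspose_mul_support (h : IsDoubleMarkov β G η M y) (k l : Z) :
    (M k l)ᴴ * cfc nonzeroIndicator η = (M k l)ᴴ := by
  rw [← conjTranspose_cfc nonzeroIndicator η, ← Matrix.conjTranspose_mul, h.support_mul]

lemma map_mul_eq_mul_map (h : IsDoubleMarkov β G η M y) (k l : Z) :
    β (M k l) * G = G * β (M l k)ᴴ := by
  rw [h.map_mul_eq, ← h.conjTranspose_mul l k, ← h.map_mul_eq, Matrix.conjTranspose_mul,
    h.isHermitian.eq, starAlgHom_conjTranspose]

lemma eq_of_map_mul_eq (h : IsDoubleMarkov β G η M y) {a b : Matrix q q ℂ}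
    (ha : a * cfc nonzeroIndicator η = a) (hb : b * cfc nonzeroIndicator η = b)
    (hab : β a * G = β b * G) : a = b := by
  have zero : β (a - b) * G = 0 := by rw [map_sub, Matrix.sub_mul, hab, sub_self]
  have restrict : IsRestriction β (G * Gᴴ) η := h.isHermitian.eq.symm ▸ h.isRestriction
  rw [← sub_eq_zero, ← ha, ← hb, ← Matrix.sub_mul]
  exact mul_cfc_nonzeroIndicator_eq_zero h.posSemidef ((mul_cfc_sqrt_eq_zero_iff h.posSemidef).2
    ((restrict.map_mul_eq_zero_iff h.posSemidef).1 zero))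

/- If the adjoint side of `G` also carries an action of `x`, then `M k l` may be exchanged for
`y k l`, which commutes with `x`. -/
lemma mul_comm_of_map_mul_eq (h : IsDoubleMarkov β G η M y) (k l : Z) {x x' : Matrix q q ℂ}
    (support : x * cfc nonzeroIndicator η = x) (hx : β x * G = G * β x') :
    M k l * x = x * M k l := by
  refine h.eq_of_map_mul_eq (by rw [Matrix.mul_assoc, support])
    (by rw [Matrix.mul_assoc, h.mul_support]) ?_
  calc β (M k l * x) * G = β (M k l) * G * β x' := by
        rw [map_mul, Matrix.mul_assoc, hx, Matrix.mul_assoc]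
    _ = y k l * β x * G := by rw [h.map_mul_eq, Matrix.mul_assoc, ← hx, Matrix.mul_assoc]
    _ = β (x * M k l) * G := by
        rw [h.mul_map, Matrix.mul_assoc, ← h.map_mul_eq, map_mul, Matrix.mul_assoc]

lemma mul_comm (h : IsDoubleMarkov β G η M y) (k l i j : Z) :
    M k l * M i j = M i j * M k l :=
  h.mul_comm_of_map_mul_eq k l (h.mul_support i j) (h.map_mul_eq_mul_map i j)

lemma mul_conjTranspose_comm (h : IsDoubleMarkov β G η M y) (k l i j : Z) :
    M k l * (M i j)ᴴ = (M i j)ᴴ * M k l :=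
  h.mul_comm_of_map_mul_eq k l (h.conjTranspose_mul_support i j)
    (map_conjTranspose_mul_eq h.isHermitian h.isRestriction h.posSemidef (h.map_mul_eq_mul_map i j)
      (h.mul_cfc_sqrt i j) (h.mul_support i j))

lemma conjTranspose_mul_cfc_sqrt (h : IsDoubleMarkov β G η M y) (k l : Z) :
    (M k l)ᴴ * cfc Real.sqrt η = cfc Real.sqrt η * M l k := by
  have fuglede := conjTranspose_mul_eq_of_mul_eq (h.mul_conjTranspose_comm k l k l)
    (by rw [conjTranspose_conjTranspose, h.mul_conjTranspose_comm]) (h.mul_cfc_sqrt k l)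
  rwa [conjTranspose_conjTranspose] at fuglede

lemma mul_middle_comm (h : IsDoubleMarkov β G η M y) (k l : Z) : M k l * η = η * M k l := by
  rw [← cfc_sqrt_mul_cfc_sqrt h.posSemidef, ← Matrix.mul_assoc, h.mul_cfc_sqrt, Matrix.mul_assoc,
    h.conjTranspose_mul_cfc_sqrt, Matrix.mul_assoc]

lemma mul_cfc_sqrt_comm (h : IsDoubleMarkov β G η M y) (k l : Z) :
    M k l * cfc Real.sqrt η = cfc Real.sqrt η * M k l :=
  (cfc_mul_eq_mul_cfc h.posSemidef.1 h.posSemidef.1 (h.mul_middle_comm k l).symm _).symm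

lemma conjTranspose_eq (h : IsDoubleMarkov β G η M y) (k l : Z) : (M k l)ᴴ = M l k := by
  rw [← sub_eq_zero, ← h.conjTranspose_mul_support, ← h.mul_support l k, ← Matrix.sub_mul]
  exact mul_cfc_nonzeroIndicator_eq_zero h.posSemidef (by
    rw [Matrix.sub_mul, h.conjTranspose_mul_cfc_sqrt, h.mul_cfc_sqrt_comm, sub_self])

lemma exists_unitaryDiagonal (h : IsDoubleMarkov β G η M y) :
    ∃ (V : unitaryGroup q ℂ) (p : q → ℂ) (m : q → Matrix Z Z ℂ), η = unitaryDiagonal V p ∧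
      (∀ k l, M k l = unitaryDiagonal V (fun b => m b k l)) ∧ ∀ b, (m b).IsHermitian := by
  obtain ⟨V, d, hd⟩ := _root_.exists_unitaryDiagonal
    (M := fun i : Option (Z × Z) => i.elim η fun kl => M kl.1 kl.2)
    (by
      rintro (_ | i) (_ | j)
      exacts [rfl, (h.mul_middle_comm _ _).symm, h.mul_middle_comm _ _, h.mul_comm _ _ _ _])
    (by
      rintro (_ | i) (_ | j)
      · simp only [Option.elim_none, h.posSemidef.1.eq]
      · simp only [Option.elim_none, Option.elim_some, h.conjTranspose_eq, h.mul_middle_comm]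
      · simp only [Option.elim_none, Option.elim_some, h.posSemidef.1.eq, h.mul_middle_comm]
      · exact h.mul_conjTranspose_comm _ _ _ _)
  refine ⟨V, d none, fun b k l => d (some (k, l)) b, hd none, fun k l => hd (some (k, l)),
    fun b => ?_⟩
  ext k l
  have adjoint : unitaryDiagonal V (star (d (some (l, k)))) =
      unitaryDiagonal V (d (some (k, l))) := by
    rw [map_star, ← hd, ← hd, star_eq_conjTranspose]
    exact h.conjTranspose_eq l k
  exact congrFun (unitaryDiagonal_injective V adjoint) b

end IsDoubleMarkov

end DoubleMarkov

/-! ### Partial traces -/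

section PartialTrace

variable {N M K : Type*}

/-- The block at position `(k, l)` in the tensor factor `K`, where `e` identifies the index set `N`
of the whole system with `M × K`. -/
def block (e : N ≃ M × K) (k l : K) (R : Matrix N N ℂ) : Matrix M M ℂ :=
  Matrix.of fun i j => R (e.symm (i, k)) (e.symm (j, l))

lemma block_conjTranspose (e : N ≃ M × K) (R : Matrix N N ℂ) (k l : K) :
    block e k l Rᴴ = (block e l k R)ᴴ :=
  rfl

/-- The partial trace over the tensor factor `K` of `N ≃ M × K`. -/
def partialTrace [Fintype K] (e : N ≃ M × K) (R : Matrix N N ℂ) : Matrix M M ℂ :=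
  Matrix.of fun i j => ∑ k, R (e.symm (i, k)) (e.symm (j, k))

lemma partialTrace_eq_sum [Fintype K] (e : N ≃ M × K) (R : Matrix N N ℂ) :
    partialTrace e R = ∑ k, block e k k R := by
  ext i j
  simp only [partialTrace, block, Matrix.sum_apply, of_apply]

lemma partialTrace_sum [Fintype K] {ι : Type*} (s : Finset ι) (e : N ≃ M × K)
    (R : ι → Matrix N N ℂ) : partialTrace e (∑ i ∈ s, R i) = ∑ i ∈ s, partialTrace e (R i) := by
  ext i j
  simp only [partialTrace, Matrix.sum_apply, of_apply]
  exact Finset.sum_comm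

lemma partialTrace_zero [Fintype K] (e : N ≃ M × K) : partialTrace e 0 = 0 := by
  ext i j
  simp only [partialTrace, of_apply, Matrix.zero_apply, Finset.sum_const_zero]

lemma partialTrace_conjTranspose [Fintype K] (e : N ≃ M × K) (R : Matrix N N ℂ) :
    partialTrace e Rᴴ = (partialTrace e R)ᴴ := by
  simp only [partialTrace_eq_sum, conjTranspose_sum, block_conjTranspose]

lemma partialTrace_posSemidef [Fintype K] (e : N ≃ M × K) {R : Matrix N N ℂ}
    (hR : R.PosSemidef) : (partialTrace e R).PosSemidef := by
  rw [partialTrace_eq_sum]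
  exact posSemidef_sum _ fun k _ => hR.submatrix fun i => e.symm (i, k)

variable [Fintype N] [Fintype M] [Fintype K]

lemma block_mul (e : N ≃ M × K) (R T : Matrix N N ℂ) (k l : K) :
    block e k l (R * T) = ∑ j, block e k j R * block e j l T := by
  ext i i'
  simp only [block, Matrix.mul_apply, Matrix.sum_apply, of_apply]
  rw [← e.symm.sum_comp, Fintype.sum_prod_type, Finset.sum_comm]

lemma trace_partialTrace (e : N ≃ M × K) (R : Matrix N N ℂ) :
    (partialTrace e R).trace = R.trace := by
  simp only [Matrix.trace, partialTrace, diag_apply, of_apply]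
  rw [← e.symm.sum_comp, Fintype.sum_prod_type]

variable [DecidableEq N] [DecidableEq M] [DecidableEq K]

open scoped Kronecker in
/-- The embedding `x ↦ x ⊗ 1` of the matrices of the subsystem `M` of `N ≃ M × K`. -/
noncomputable def embed (e : N ≃ M × K) : Matrix M M ℂ →⋆ₐ[ℂ] Matrix N N ℂ where
  toFun x := (x ⊗ₖ (1 : Matrix K K ℂ)).submatrix e e
  map_one' := by simp
  map_mul' x y := by
    rw [submatrix_mul_equiv, ← mul_kronecker_mul, Matrix.one_mul]
  map_zero' := by simp
  map_add' x y := by simp [add_kronecker, submatrix_add]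
  commutes' c := by
    rw [Algebra.algebraMap_eq_smul_one, Algebra.algebraMap_eq_smul_one, smul_kronecker,
      one_kronecker_one]
    ext i j
    simp [Matrix.one_apply]
  map_star' x := by
    simp [star_eq_conjTranspose, conjTranspose_kronecker]

lemma embed_apply (e : N ≃ M × K) (x : Matrix M M ℂ) (i j : N) :
    embed e x i j = if (e i).2 = (e j).2 then x (e i).1 (e j).1 else 0 := by
  change x (e i).1 (e j).1 * (1 : Matrix K K ℂ) (e i).2 (e j).2 = _
  simp [Matrix.one_apply]

lemma block_embed (e : N ≃ M × K) (x : Matrix M M ℂ) (k l : K) :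
    block e k l (embed e x) = if k = l then x else 0 := by
  ext i j
  by_cases h : k = l <;> simp [block, embed_apply, h]

lemma block_mul_embed (e : N ≃ M × K) (R : Matrix N N ℂ) (x : Matrix M M ℂ) (k l : K) :
    block e k l (R * embed e x) = block e k l R * x := by
  simp only [block_mul, block_embed, mul_ite, mul_zero, Finset.sum_ite_eq',
    Finset.mem_univ, if_true]

lemma block_embed_mul (e : N ≃ M × K) (R : Matrix N N ℂ) (x : Matrix M M ℂ) (k l : K) :
    block e k l (embed e x * R) = x * block e k l R := by
  simp only [block_mul, block_embed, ite_mul, zero_mul, Finset.sum_ite_eq,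
    Finset.mem_univ, if_true]

lemma partialTrace_embed_mul (e : N ≃ M × K) (x : Matrix M M ℂ) (R : Matrix N N ℂ) :
    partialTrace e (embed e x * R) = x * partialTrace e R := by
  simp only [partialTrace_eq_sum, block_embed_mul, Finset.mul_sum]

lemma partialTrace_mul_embed (e : N ≃ M × K) (x : Matrix M M ℂ) (R : Matrix N N ℂ) :
    partialTrace e (R * embed e x) = partialTrace e R * x := by
  simp only [partialTrace_eq_sum, block_mul_embed, Finset.sum_mul]

lemma isRestriction_partialTrace (e : N ≃ M × K) (R : Matrix N N ℂ) :
    IsRestriction (embed e) R (partialTrace e R) := fun x => by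
  rw [← trace_partialTrace e, partialTrace_embed_mul]

lemma isMarginalSquare_partialTrace {L Q K' K'' : Type*} [Fintype L] [DecidableEq L] [Fintype Q]
    [DecidableEq Q] [Fintype K'] [DecidableEq K'] [Fintype K''] [DecidableEq K''] {e : N ≃ M × K}
    {e' : N ≃ L × K'} {e'' : M ≃ Q × K''} {R : Matrix N N ℂ} (hR : R.PosSemidef)
    (h : partialTrace e (embed e' (partialTrace e' R)) =
      embed e'' (partialTrace e'' (partialTrace e R))) :
    IsMarginalSquare (embed e) (embed e') (embed e'') R (partialTrace e R) (partialTrace e' R)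
      (partialTrace e'' (partialTrace e R)) where
  posSemidef := hR
  posSemidef_left := partialTrace_posSemidef _ hR
  posSemidef_right := partialTrace_posSemidef _ hR
  posSemidef_middle := partialTrace_posSemidef _ (partialTrace_posSemidef _ hR)
  isRestriction_left := isRestriction_partialTrace _ _
  isRestriction_right := isRestriction_partialTrace _ _
  isRestriction_middle := isRestriction_partialTrace _ _
  isRestriction_map := h ▸ isRestriction_partialTrace _ _

end PartialTrace

section Subsystems

/-- The identification of `X × Y` with itself under which `X` is kept and `Y` is traced out. -/
def keepFst (X Y : Type*) : X × Y ≃ X × Y := Equiv.refl _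

/-- The identification under which `Y` is kept and `X` is traced out. -/
def keepSnd (X Y : Type*) : X × Y ≃ Y × X := Equiv.prodComm X Y

/-- The identification under which `XY` is kept and `Z` is traced out. -/
def keepFstSnd (X Y Z : Type*) : X × Y × Z ≃ (X × Y) × Z := (Equiv.prodAssoc X Y Z).symm

/-- The identification under which `XZ` is kept and `Y` is traced out. -/
def keepFstThd (X Y Z : Type*) : X × Y × Z ≃ (X × Z) × Y where
  toFun p := ((p.1, p.2.2), p.2.1)
  invFun q := (q.1.1, q.2, q.1.2)

variable {X Y Z : Type*}

lemma partialTrace_keepSnd_keepFstThd [Fintype X] [Fintype Y]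
    (T : Matrix (X × Y × Z) (X × Y × Z) ℂ) :
    partialTrace (keepSnd X Z) (partialTrace (keepFstThd X Y Z) T) =
      partialTrace (keepSnd Y Z) (partialTrace (keepSnd X (Y × Z)) T) := by
  ext
  exact Finset.sum_comm

lemma partialTrace_keepSnd_keepFstSnd [Fintype X] [Fintype Z]
    (T : Matrix (X × Y × Z) (X × Y × Z) ℂ) :
    partialTrace (keepSnd X Y) (partialTrace (keepFstSnd X Y Z) T) =
      partialTrace (keepFst Y Z) (partialTrace (keepSnd X (Y × Z)) T) := by
  ext
  exact Finset.sum_comm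

lemma partialTrace_keepFst_keepFstSnd [Fintype Y] [Fintype Z]
    (T : Matrix (X × Y × Z) (X × Y × Z) ℂ) :
    partialTrace (keepFst X Y) (partialTrace (keepFstSnd X Y Z) T) =
      partialTrace (keepFst X Z) (partialTrace (keepFstThd X Y Z) T) := by
  ext
  exact Finset.sum_comm

variable [Fintype X] [DecidableEq X] [Fintype Y] [DecidableEq Y]

lemma embed_keepFst_apply (x : Matrix X X ℂ) (a a' : X) (b b' : Y) :
    embed (keepFst X Y) x (a, b) (a', b') = if b = b' then x a a' else 0 :=
  embed_apply (keepFst X Y) x _ _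

lemma embed_keepSnd_apply (y : Matrix Y Y ℂ) (a a' : X) (b b' : Y) :
    embed (keepSnd X Y) y (a, b) (a', b') = if a = a' then y b b' else 0 :=
  embed_apply (keepSnd X Y) y _ _

lemma embed_keepFst_mul_embed_keepSnd (x : Matrix X X ℂ) (y : Matrix Y Y ℂ) :
    embed (keepFst X Y) x * embed (keepSnd X Y) y =
      embed (keepSnd X Y) y * embed (keepFst X Y) x := by
  ext ⟨a, b⟩ ⟨a', b'⟩
  simp [Matrix.mul_apply, Fintype.sum_prod_type, embed_keepFst_apply, embed_keepSnd_apply, mul_comm]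

lemma partialTrace_keepSnd_mul_embed_keepFst (x : Matrix X X ℂ) (R : Matrix (X × Y) (X × Y) ℂ) :
    partialTrace (keepSnd X Y) (R * embed (keepFst X Y) x) =
      partialTrace (keepSnd X Y) (embed (keepFst X Y) x * R) := by
  ext b b'
  change ∑ a, (R * embed (keepFst X Y) x) (a, b) (a, b') =
    ∑ a, (embed (keepFst X Y) x * R) (a, b) (a, b')
  simp only [Matrix.mul_apply, Fintype.sum_prod_type, embed_keepFst_apply, ite_mul, zero_mul,
    mul_ite, mul_zero, Finset.sum_ite_eq, Finset.sum_ite_eq', Finset.mem_univ, if_true]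
  rw [Finset.sum_comm]
  simp only [mul_comm]

variable [Fintype Z] [DecidableEq Z]

lemma embed_keepFstSnd_apply (x : Matrix (X × Y) (X × Y) ℂ) (a a' : X) (b b' : Y) (c c' : Z) :
    embed (keepFstSnd X Y Z) x (a, b, c) (a', b', c') = if c = c' then x (a, b) (a', b') else 0 :=
  embed_apply (keepFstSnd X Y Z) x _ _

lemma embed_keepFstThd_apply (x : Matrix (X × Z) (X × Z) ℂ) (a a' : X) (b b' : Y) (c c' : Z) :
    embed (keepFstThd X Y Z) x (a, b, c) (a', b', c') = if b = b' then x (a, c) (a', c') else 0 :=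
  embed_apply (keepFstThd X Y Z) x _ _

lemma embed_keepFstSnd_keepFst (x : Matrix X X ℂ) :
    embed (keepFstSnd X Y Z) (embed (keepFst X Y) x) = embed (keepFst X (Y × Z)) x := by
  ext ⟨a, b, c⟩ ⟨a', b', c'⟩
  simp only [embed_keepFstSnd_apply, embed_keepFst_apply, Prod.mk.injEq, ite_and]
  split_ifs <;> rfl

lemma embed_keepFstThd_keepFst (x : Matrix X X ℂ) :
    embed (keepFstThd X Y Z) (embed (keepFst X Z) x) = embed (keepFst X (Y × Z)) x := by
  ext ⟨a, b, c⟩ ⟨a', b', c'⟩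
  simp only [embed_keepFstThd_apply, embed_keepFst_apply, Prod.mk.injEq, ite_and]

lemma embed_keepFstSnd_keepSnd (y : Matrix Y Y ℂ) :
    embed (keepFstSnd X Y Z) (embed (keepSnd X Y) y) =
      embed (keepSnd X (Y × Z)) (embed (keepFst Y Z) y) := by
  ext ⟨a, b, c⟩ ⟨a', b', c'⟩
  simp only [embed_keepFstSnd_apply, embed_keepSnd_apply, embed_keepFst_apply]
  split_ifs <;> rfl

lemma embed_keepFstThd_keepSnd (z : Matrix Z Z ℂ) :
    embed (keepFstThd X Y Z) (embed (keepSnd X Z) z) =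
      embed (keepSnd X (Y × Z)) (embed (keepSnd Y Z) z) := by
  ext ⟨a, b, c⟩ ⟨a', b', c'⟩
  simp only [embed_keepFstThd_apply, embed_keepSnd_apply]
  split_ifs <;> rfl

lemma block_keepFstSnd_embed_keepSnd (κ : Matrix (Y × Z) (Y × Z) ℂ) (k l : Z) :
    block (keepFstSnd X Y Z) k l (embed (keepSnd X (Y × Z)) κ) =
      embed (keepSnd X Y) (block (keepFst Y Z) k l κ) := by
  ext ⟨a, b⟩ ⟨a', b'⟩
  rw [embed_keepSnd_apply]
  exact embed_keepSnd_apply κ a a' (b, k) (b', l)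

lemma block_keepFstSnd_embed_keepFstThd (κ : Matrix (X × Z) (X × Z) ℂ) (k l : Z) :
    block (keepFstSnd X Y Z) k l (embed (keepFstThd X Y Z) κ) =
      embed (keepFst X Y) (block (keepFst X Z) k l κ) := by
  ext ⟨a, b⟩ ⟨a', b'⟩
  rw [embed_keepFst_apply]
  exact embed_keepFstThd_apply κ a a' b b' k l

lemma block_keepFstThd_embed_keepSnd (κ : Matrix (Y × Z) (Y × Z) ℂ) (k l : Y) :
    block (keepFstThd X Y Z) k l (embed (keepSnd X (Y × Z)) κ) =
      embed (keepSnd X Z) (block (keepSnd Y Z) k l κ) := by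
  ext ⟨a, c⟩ ⟨a', c'⟩
  rw [embed_keepSnd_apply]
  exact embed_keepSnd_apply κ a a' (k, c) (l, c')

lemma block_keepSnd_embed_keepFstThd (κ : Matrix (X × Z) (X × Z) ℂ) (k l : X) :
    block (keepSnd X (Y × Z)) k l (embed (keepFstThd X Y Z) κ) =
      embed (keepSnd Y Z) (block (keepSnd X Z) k l κ) := by
  ext ⟨b, c⟩ ⟨b', c'⟩
  rw [embed_keepSnd_apply]
  exact embed_keepFstThd_apply κ k l b b' c c'

variable {T : Matrix (X × Y × Z) (X × Y × Z) ℂ}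

lemma isMarginalSquare_fst_snd_thd (hT : T.PosSemidef) :
    IsMarginalSquare (embed (keepFstSnd X Y Z)) (embed (keepSnd X (Y × Z))) (embed (keepSnd X Y)) T
      (partialTrace (keepFstSnd X Y Z) T) (partialTrace (keepSnd X (Y × Z)) T)
      (partialTrace (keepSnd X Y) (partialTrace (keepFstSnd X Y Z) T)) :=
  isMarginalSquare_partialTrace hT (by
    rw [partialTrace_keepSnd_keepFstSnd, partialTrace_eq_sum (keepFstSnd X Y Z),
      partialTrace_eq_sum (keepFst Y Z), map_sum]
    simp only [block_keepFstSnd_embed_keepSnd])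

lemma isMarginalSquare_snd_fst_thd (hT : T.PosSemidef) :
    IsMarginalSquare (embed (keepFstSnd X Y Z)) (embed (keepFstThd X Y Z)) (embed (keepFst X Y)) T
      (partialTrace (keepFstSnd X Y Z) T) (partialTrace (keepFstThd X Y Z) T)
      (partialTrace (keepFst X Y) (partialTrace (keepFstSnd X Y Z) T)) :=
  isMarginalSquare_partialTrace hT (by
    rw [partialTrace_keepFst_keepFstSnd, partialTrace_eq_sum (keepFstSnd X Y Z),
      partialTrace_eq_sum (keepFst X Z), map_sum]
    simp only [block_keepFstSnd_embed_keepFstThd])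

lemma isMarginalSquare_fst_thd_snd (hT : T.PosSemidef) :
    IsMarginalSquare (embed (keepFstThd X Y Z)) (embed (keepSnd X (Y × Z))) (embed (keepSnd X Z)) T
      (partialTrace (keepFstThd X Y Z) T) (partialTrace (keepSnd X (Y × Z)) T)
      (partialTrace (keepSnd X Z) (partialTrace (keepFstThd X Y Z) T)) :=
  isMarginalSquare_partialTrace hT (by
    rw [partialTrace_keepSnd_keepFstThd, partialTrace_eq_sum (keepFstThd X Y Z),
      partialTrace_eq_sum (keepSnd Y Z), map_sum]
    simp only [block_keepFstThd_embed_keepSnd])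

end Subsystems

/-! ### States that are Markov in two orders -/

section CommonLabel

lemma mul_pi_single_one {Y : Type*} [DecidableEq Y] (d : Y → ℂ) (b : Y) :
    d * Pi.single b (1 : ℂ) = d b • Pi.single b (1 : ℂ) := by
  ext b'
  by_cases h : b' = b <;> simp [h]

lemma sum_pi_single_one {Y : Type*} [Fintype Y] [DecidableEq Y] :
    ∑ b : Y, Pi.single b (1 : ℂ) = 1 :=
  Finset.univ_sum_single 1

variable {n X Y Z Z' : Type*} [Fintype n] [DecidableEq n]

/- Both sides act on the joint eigenspace with indices `b` and `a` as scalars, and the joint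
eigenspaces that `τ` meets are those with `m b = m' a`. -/
lemma map_comp_mul_eq_of_forall_map_mul_eq [Finite X] [Finite Y] {φ : (Y → ℂ) →⋆ₐ[ℂ] Matrix n n ℂ}
    {ψ : (X → ℂ) →⋆ₐ[ℂ] Matrix n n ℂ} (commute : ∀ d d', ψ d' * φ d = φ d * ψ d')
    {τ : Matrix n n ℂ} {m : Y → Matrix Z Z' ℂ} {m' : X → Matrix Z Z' ℂ}
    (h : ∀ k l, φ (fun b => m b k l) * τ = ψ (fun a => m' a k l) * τ) (f : Matrix Z Z' ℂ → ℂ) :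
    φ (fun b => f (m b)) * τ = ψ (fun a => f (m' a)) * τ := by
  classical
  have := Fintype.ofFinite X
  have := Fintype.ofFinite Y
  let proj (b : Y) (a : X) : Matrix n n ℂ := φ (Pi.single b 1) * ψ (Pi.single a 1)
  have proj_mul_left (d : Y → ℂ) (b a) : proj b a * (φ d * τ) = d b • (proj b a * τ) := by
    rw [← Matrix.mul_assoc, Matrix.mul_assoc (φ _), commute, ← Matrix.mul_assoc, ← map_mul,
      mul_comm, mul_pi_single_one, map_smul, Matrix.smul_mul, Matrix.smul_mul]
  have proj_mul_right (d : X → ℂ) (b a) : proj b a * (ψ d * τ) = d a • (proj b a * τ) := by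
    rw [← Matrix.mul_assoc, Matrix.mul_assoc (φ _), ← map_mul, mul_comm, mul_pi_single_one,
      map_smul, Matrix.mul_smul, Matrix.smul_mul]
  have sum_proj : ∑ b, ∑ a, proj b a = 1 := by
    simp only [proj, ← Finset.mul_sum, ← map_sum, sum_pi_single_one, map_one,
      mul_one]
  have proj_eq (b a) : proj b a * (φ (fun b => f (m b)) * τ) =
      proj b a * (ψ (fun a => f (m' a)) * τ) := by
    rw [proj_mul_left, proj_mul_right]
    by_cases zero : proj b a * τ = 0
    · rw [zero, smul_zero, smul_zero]
    · have label_eq : m b = m' a := by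
        ext k l
        have smul_eq := congrArg (proj b a * ·) (h k l)
        simp only [proj_mul_left, proj_mul_right] at smul_eq
        exact smul_left_injective ℂ zero smul_eq
      rw [label_eq]
  rw [← Matrix.one_mul (φ _ * τ), ← Matrix.one_mul (ψ _ * τ), ← sum_proj]
  simp only [Finset.sum_mul, proj_eq]

end CommonLabel

section ConditionalBlock

variable {Y Z : Type*} [Fintype Y] [DecidableEq Y] [Fintype Z] [DecidableEq Z]
  {κ : Matrix (Y × Z) (Y × Z) ℂ}

/-- The block at position `(k, l)` in `Z` of `√κ η^(-1/2)`, where `η` is the `Y`-marginal of `κ`. -/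
noncomputable def conditionalBlock (κ : Matrix (Y × Z) (Y × Z) ℂ) (k l : Z) : Matrix Y Y ℂ :=
  block (keepFst Y Z) k l (cfc Real.sqrt κ) * cfc invSqrt (partialTrace (keepFst Y Z) κ)

lemma cfc_nonzeroIndicator_mul_block_sqrt (hκ : κ.PosSemidef) (k l : Z) :
    cfc nonzeroIndicator (partialTrace (keepFst Y Z) κ) *
      block (keepFst Y Z) k l (cfc Real.sqrt κ) = block (keepFst Y Z) k l (cfc Real.sqrt κ) := by
  rw [← block_embed_mul, mul_cfc_sqrt_eq_of_mul_eq hκ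
    ((isRestriction_partialTrace _ κ).map_cfc_nonzeroIndicator_mul hκ
      (partialTrace_posSemidef _ hκ))]

lemma block_sqrt_mul_cfc_nonzeroIndicator (hκ : κ.PosSemidef) (k l : Z) :
    block (keepFst Y Z) k l (cfc Real.sqrt κ) *
      cfc nonzeroIndicator (partialTrace (keepFst Y Z) κ) =
        block (keepFst Y Z) k l (cfc Real.sqrt κ) := by
  have adjoint := congrArg conjTranspose (cfc_nonzeroIndicator_mul_block_sqrt hκ l k)
  rwa [conjTranspose_mul, conjTranspose_cfc, ← block_conjTranspose, conjTranspose_cfc] at adjoint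

lemma conditionalBlock_mul_cfc_sqrt (hκ : κ.PosSemidef) (k l : Z) :
    conditionalBlock κ k l * cfc Real.sqrt (partialTrace (keepFst Y Z) κ) =
      block (keepFst Y Z) k l (cfc Real.sqrt κ) := by
  rw [conditionalBlock, Matrix.mul_assoc,
    cfc_invSqrt_mul_cfc_sqrt (partialTrace_posSemidef _ hκ), block_sqrt_mul_cfc_nonzeroIndicator hκ]

lemma cfc_sqrt_mul_conjTranspose_conditionalBlock (hκ : κ.PosSemidef) (k l : Z) :
    cfc Real.sqrt (partialTrace (keepFst Y Z) κ) * (conditionalBlock κ l k)ᴴ =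
      block (keepFst Y Z) k l (cfc Real.sqrt κ) := by
  rw [← conjTranspose_cfc, ← conjTranspose_mul, conditionalBlock_mul_cfc_sqrt hκ,
    ← block_conjTranspose, conjTranspose_cfc]

lemma cfc_nonzeroIndicator_mul_conditionalBlock (hκ : κ.PosSemidef) (k l : Z) :
    cfc nonzeroIndicator (partialTrace (keepFst Y Z) κ) * conditionalBlock κ k l =
      conditionalBlock κ k l := by
  rw [conditionalBlock, ← Matrix.mul_assoc, cfc_nonzeroIndicator_mul_block_sqrt hκ]

lemma conditionalBlock_mul_cfc_nonzeroIndicator (hκ : κ.PosSemidef) (k l : Z) :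
    conditionalBlock κ k l * cfc nonzeroIndicator (partialTrace (keepFst Y Z) κ) =
      conditionalBlock κ k l := by
  rw [← cfc_sqrt_mul_cfc_invSqrt (partialTrace_posSemidef _ hκ), ← Matrix.mul_assoc,
    conditionalBlock_mul_cfc_sqrt hκ, conditionalBlock]

variable {n : Type*} [Fintype n] [DecidableEq n] {β : Matrix Y Y ℂ →⋆ₐ[ℂ] Matrix n n ℂ}
  {G : Matrix n n ℂ} {y : Z → Z → Matrix n n ℂ}

lemma isDoubleMarkov_conditionalBlock (hκ : κ.PosSemidef) (hG : G.IsHermitian)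
    (restrict : IsRestriction β (G * G) (partialTrace (keepFst Y Z) κ))
    (commute : ∀ k l x, y k l * β x = β x * y k l)
    (map_mul_eq : ∀ k l, β (conditionalBlock κ k l) * G = y k l * G)
    (conjTranspose_eq : ∀ k l, (y k l * G)ᴴ = y l k * G) :
    IsDoubleMarkov β G (partialTrace (keepFst Y Z) κ) (conditionalBlock κ) y where
  isHermitian := hG
  posSemidef := partialTrace_posSemidef _ hκ
  isRestriction := restrict
  support_mul := cfc_nonzeroIndicator_mul_conditionalBlock hκ
  mul_support := conditionalBlock_mul_cfc_nonzeroIndicator hκ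
  mul_cfc_sqrt k l := by
    rw [conditionalBlock_mul_cfc_sqrt hκ, cfc_sqrt_mul_conjTranspose_conditionalBlock hκ]
  mul_map := commute
  map_mul_eq := map_mul_eq
  conjTranspose_mul := conjTranspose_eq

lemma IsDoubleMarkov.block_eq_sum
    (h : IsDoubleMarkov β G (partialTrace (keepFst Y Z) κ) (conditionalBlock κ) y)
    (hκ : κ.PosSemidef) (k l : Z) :
    block (keepFst Y Z) k l κ = ∑ j, partialTrace (keepFst Y Z) κ *
      (conditionalBlock κ k j * conditionalBlock κ j l) := by
  have block_mul_block (j : Z) : block (keepFst Y Z) k j (cfc Real.sqrt κ) *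
      block (keepFst Y Z) j l (cfc Real.sqrt κ) = partialTrace (keepFst Y Z) κ *
        (conditionalBlock κ k j * conditionalBlock κ j l) := by
    conv_rhs => rw [← cfc_sqrt_mul_cfc_sqrt h.posSemidef, Matrix.mul_assoc, ← Matrix.mul_assoc _
      (conditionalBlock κ k j), ← h.mul_cfc_sqrt_comm, Matrix.mul_assoc, ← h.mul_cfc_sqrt_comm,
      ← Matrix.mul_assoc, ← h.mul_cfc_sqrt_comm]
    rw [conditionalBlock_mul_cfc_sqrt hκ, conditionalBlock_mul_cfc_sqrt hκ]
  rw [← cfc_sqrt_mul_cfc_sqrt hκ, block_mul, cfc_sqrt_mul_cfc_sqrt hκ]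
  exact Finset.sum_congr rfl fun j _ => block_mul_block j

end ConditionalBlock

section ClassicalQuantum

lemma exists_ofReal_of_unitaryDiagonal_isHermitian {Y : Type*} [Fintype Y] [DecidableEq Y]
    {V : unitaryGroup Y ℂ} {p : Y → ℂ}
    (h : (unitaryDiagonal V p).IsHermitian) : ∃ lam : Y → ℝ, p = fun b => (lam b : ℂ) := by
  have star_eq : star p = p := unitaryDiagonal_injective V ((map_star _ p).trans h)
  exact ⟨fun b => (p b).re, funext fun b => (Complex.conj_eq_iff_re.1 (congrFun star_eq b)).symm⟩

variable {Y Z : Type*} [Fintype Y] [DecidableEq Y] [Fintype Z]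

/-- The state `κ` on `YZ` is classical on `Y`: it is the sum of `lam b • |v_b⟩⟨v_b| ⊗ ν b`, where
the `v_b` are the columns of `V`. It is expressed by simultaneous diagonalization of the blocks. -/
structure IsClassicalQuantum (κ : Matrix (Y × Z) (Y × Z) ℂ) (V : unitaryGroup Y ℂ) (lam : Y → ℝ)
    (ν : Y → Matrix Z Z ℂ) : Prop where
  posSemidef (b : Y) : (ν b).PosSemidef
  trace_eq_one (b : Y) : lam b ≠ 0 → (ν b).trace = 1
  block_eq (k l : Z) :
    block (keepFst Y Z) k l κ = unitaryDiagonal V (fun b => (lam b : ℂ) * ν b k l)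

namespace IsClassicalQuantum

variable {κ : Matrix (Y × Z) (Y × Z) ℂ} {V : unitaryGroup Y ℂ} {lam : Y → ℝ}
  {ν : Y → Matrix Z Z ℂ}

lemma partialTrace_eq (h : IsClassicalQuantum κ V lam ν) :
    partialTrace (keepFst Y Z) κ = unitaryDiagonal V (fun b => (lam b : ℂ)) := by
  rw [partialTrace_eq_sum]
  simp only [h.block_eq]
  rw [← map_sum]
  congr 1
  ext b
  rw [Finset.sum_apply, ← Finset.mul_sum]
  by_cases hb : lam b = 0
  · rw [hb, Complex.ofReal_zero, zero_mul]
  · exact (congrArg _ (h.trace_eq_one b hb)).trans (mul_one _)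

end IsClassicalQuantum

variable [DecidableEq Z] {n : Type*} [Fintype n] [DecidableEq n]
  {β : Matrix Y Y ℂ →⋆ₐ[ℂ] Matrix n n ℂ}
  {G : Matrix n n ℂ} {y : Z → Z → Matrix n n ℂ} {κ : Matrix (Y × Z) (Y × Z) ℂ}

theorem IsDoubleMarkov.exists_isClassicalQuantum
    (h : IsDoubleMarkov β G (partialTrace (keepFst Y Z) κ) (conditionalBlock κ) y)
    (hκ : κ.PosSemidef) :
    ∃ (V : unitaryGroup Y ℂ) (lam : Y → ℝ) (m : Y → Matrix Z Z ℂ),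
      IsClassicalQuantum κ V lam (fun b => m b * m b) ∧
        ∀ k l, conditionalBlock κ k l = unitaryDiagonal V (fun b => m b k l) := by
  obtain ⟨V, p, m, marginal_eq, conditional_eq, hermitian⟩ := h.exists_unitaryDiagonal
  obtain ⟨lam, rfl⟩ := exists_ofReal_of_unitaryDiagonal_isHermitian (marginal_eq ▸ h.posSemidef.1)
  have block_eq (k l : Z) : block (keepFst Y Z) k l κ =
      unitaryDiagonal V (fun b => (lam b : ℂ) * (m b * m b) k l) := by
    rw [h.block_eq_sum hκ, marginal_eq]
    simp only [conditional_eq, ← map_mul, ← map_sum]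
    congr 1
    ext b
    simp only [Finset.sum_apply, Pi.mul_apply, Matrix.mul_apply, Finset.mul_sum]
  refine ⟨V, lam, m, ⟨fun b => ?_, fun b hb => ?_, block_eq⟩, conditional_eq⟩
  · simpa only [(hermitian b).eq] using posSemidef_conjTranspose_mul_self (m b)
  · have trace_eq := congrFun (unitaryDiagonal_injective V (by
      rw [← marginal_eq, partialTrace_eq_sum, map_sum, Finset.sum_congr rfl fun k _ => block_eq k k]
      : unitaryDiagonal V (fun b => (lam b : ℂ)) =
        unitaryDiagonal V (∑ k, fun b => (lam b : ℂ) * (m b * m b) k k))) b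
    rw [Finset.sum_apply, ← Finset.mul_sum] at trace_eq
    exact (mul_eq_left₀ (Complex.ofReal_ne_zero.2 hb)).1 trace_eq.symm

end ClassicalQuantum

section MarkovOrders

variable {X Y Z : Type*} [Fintype X] [DecidableEq X] [Fintype Y] [DecidableEq Y] [Fintype Z]
  [DecidableEq Z]

/-- The state `T` on `XYZ` is Markov in the order `Y – X – Z`: equality holds in strong
subadditivity with middle system `X`. -/
def IsMarkovAtFst (T : Matrix (X × Y × Z) (X × Y × Z) ℂ) : Prop :=
  natEntropy (partialTrace (keepFst X Y) (partialTrace (keepFstSnd X Y Z) T)) + natEntropy T =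
    natEntropy (partialTrace (keepFstSnd X Y Z) T) + natEntropy (partialTrace (keepFstThd X Y Z) T)

/-- The state `T` on `XYZ` is Markov in the order `X – Y – Z`: equality holds in strong
subadditivity with middle system `Y`. -/
def IsMarkovAtSnd (T : Matrix (X × Y × Z) (X × Y × Z) ℂ) : Prop :=
  natEntropy (partialTrace (keepSnd X Y) (partialTrace (keepFstSnd X Y Z) T)) + natEntropy T =
    natEntropy (partialTrace (keepFstSnd X Y Z) T) +
      natEntropy (partialTrace (keepSnd X (Y × Z)) T)

/-- The state `T` on `XYZ` is Markov in the order `X – Z – Y`: equality holds in strong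
subadditivity with middle system `Z`. -/
def IsMarkovAtThd (T : Matrix (X × Y × Z) (X × Y × Z) ℂ) : Prop :=
  natEntropy (partialTrace (keepSnd X Z) (partialTrace (keepFstThd X Y Z) T)) + natEntropy T =
    natEntropy (partialTrace (keepFstThd X Y Z) T) +
      natEntropy (partialTrace (keepSnd X (Y × Z)) T)

variable {T : Matrix (X × Y × Z) (X × Y × Z) ℂ}

lemma IsMarkovAtSnd.embed_conditionalBlock_mul (h : IsMarkovAtSnd T) (hT : T.PosSemidef)
    (k l : Z) :
    embed (keepSnd X Y) (conditionalBlock (partialTrace (keepSnd X (Y × Z)) T) k l) *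
      cfc Real.sqrt (partialTrace (keepFstSnd X Y Z) T) =
        block (keepFstSnd X Y Z) k l (cfc Real.sqrt T) := by
  rw [← (isMarginalSquare_fst_snd_thd hT).cfc_sqrt_eq h, block_mul_embed,
    block_keepFstSnd_embed_keepSnd, conditionalBlock, partialTrace_keepSnd_keepFstSnd, map_mul,
    Matrix.mul_assoc]

lemma IsMarkovAtFst.embed_conditionalBlock_mul (h : IsMarkovAtFst T) (hT : T.PosSemidef)
    (k l : Z) :
    embed (keepFst X Y) (conditionalBlock (partialTrace (keepFstThd X Y Z) T) k l) *
      cfc Real.sqrt (partialTrace (keepFstSnd X Y Z) T) =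
        block (keepFstSnd X Y Z) k l (cfc Real.sqrt T) := by
  rw [← (isMarginalSquare_snd_fst_thd hT).cfc_sqrt_eq h, block_mul_embed,
    block_keepFstSnd_embed_keepFstThd, conditionalBlock, partialTrace_keepFst_keepFstSnd, map_mul,
    Matrix.mul_assoc]

lemma isDoubleMarkov_keepSnd (h_fst : IsMarkovAtFst T) (h_snd : IsMarkovAtSnd T)
    (hT : T.PosSemidef) :
    IsDoubleMarkov (embed (keepSnd X Y)) (cfc Real.sqrt (partialTrace (keepFstSnd X Y Z) T))
      (partialTrace (keepFst Y Z) (partialTrace (keepSnd X (Y × Z)) T))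
      (conditionalBlock (partialTrace (keepSnd X (Y × Z)) T)) fun k l =>
        embed (keepFst X Y) (conditionalBlock (partialTrace (keepFstThd X Y Z) T) k l) :=
  isDoubleMarkov_conditionalBlock (partialTrace_posSemidef _ hT) (conjTranspose_cfc Real.sqrt _)
    (by
      rw [cfc_sqrt_mul_cfc_sqrt (partialTrace_posSemidef _ hT), ← partialTrace_keepSnd_keepFstSnd]
      exact isRestriction_partialTrace _ _)
    (fun _ _ _ => embed_keepFst_mul_embed_keepSnd _ _)
    (fun k l => by rw [h_snd.embed_conditionalBlock_mul hT, h_fst.embed_conditionalBlock_mul hT])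
    (fun k l => by
      rw [h_fst.embed_conditionalBlock_mul hT, h_fst.embed_conditionalBlock_mul hT,
        ← block_conjTranspose, conjTranspose_cfc])

lemma isDoubleMarkov_keepFst (h_fst : IsMarkovAtFst T) (h_snd : IsMarkovAtSnd T)
    (hT : T.PosSemidef) :
    IsDoubleMarkov (embed (keepFst X Y)) (cfc Real.sqrt (partialTrace (keepFstSnd X Y Z) T))
      (partialTrace (keepFst X Z) (partialTrace (keepFstThd X Y Z) T))
      (conditionalBlock (partialTrace (keepFstThd X Y Z) T)) fun k l =>
        embed (keepSnd X Y) (conditionalBlock (partialTrace (keepSnd X (Y × Z)) T) k l) :=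
  isDoubleMarkov_conditionalBlock (partialTrace_posSemidef _ hT) (conjTranspose_cfc Real.sqrt _)
    (by
      rw [cfc_sqrt_mul_cfc_sqrt (partialTrace_posSemidef _ hT), ← partialTrace_keepFst_keepFstSnd]
      exact isRestriction_partialTrace _ _)
    (fun _ _ _ => (embed_keepFst_mul_embed_keepSnd _ _).symm)
    (fun k l => by rw [h_snd.embed_conditionalBlock_mul hT, h_fst.embed_conditionalBlock_mul hT])
    (fun k l => by
      rw [h_snd.embed_conditionalBlock_mul hT, h_snd.embed_conditionalBlock_mul hT,
        ← block_conjTranspose, conjTranspose_cfc])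

theorem exists_isClassicalQuantum_of_isMarkovAtFst_of_isMarkovAtSnd (h_fst : IsMarkovAtFst T)
    (h_snd : IsMarkovAtSnd T) (hT : T.PosSemidef) :
    ∃ (V : unitaryGroup Y ℂ) (lam : Y → ℝ) (m : Y → Matrix Z Z ℂ) (V' : unitaryGroup X ℂ)
      (m' : X → Matrix Z Z ℂ),
      IsClassicalQuantum (partialTrace (keepSnd X (Y × Z)) T) V lam (fun b => m b * m b) ∧
      ∀ f : Matrix Z Z ℂ → ℂ,
        embed (keepSnd X Y) (unitaryDiagonal V fun b => f (m b)) *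
            partialTrace (keepFstSnd X Y Z) T =
          embed (keepFst X Y) (unitaryDiagonal V' fun a => f (m' a)) *
            partialTrace (keepFstSnd X Y Z) T := by
  obtain ⟨V, lam, m, classical, conditional_eq⟩ :=
    (isDoubleMarkov_keepSnd h_fst h_snd hT).exists_isClassicalQuantum (partialTrace_posSemidef _ hT)
  obtain ⟨V', -, m', -, conditional_eq'⟩ :=
    (isDoubleMarkov_keepFst h_fst h_snd hT).exists_isClassicalQuantum (partialTrace_posSemidef _ hT)
  refine ⟨V, lam, m, V', m', classical, fun f => ?_⟩
  rw [← cfc_sqrt_mul_cfc_sqrt (partialTrace_posSemidef (keepFstSnd X Y Z) hT), ← Matrix.mul_assoc,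
    ← Matrix.mul_assoc]
  congr 1
  refine map_comp_mul_eq_of_forall_map_mul_eq (φ := (embed (keepSnd X Y)).comp (unitaryDiagonal V))
    (ψ := (embed (keepFst X Y)).comp (unitaryDiagonal V'))
    (fun _ _ => embed_keepFst_mul_embed_keepSnd _ _) (fun k l => ?_) f
  simp only [StarAlgHom.comp_apply, ← conditional_eq, ← conditional_eq',
    h_snd.embed_conditionalBlock_mul hT, h_fst.embed_conditionalBlock_mul hT]

end MarkovOrders

/-! ### Orthogonality of the conditional marginals -/

section EffectMarginal

variable {Y Z : Type*} [Fintype Y] [DecidableEq Y] [Fintype Z] [DecidableEq Z]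
  {x : Matrix Y Y ℂ} {κ : Matrix (Y × Z) (Y × Z) ℂ}

/-- The unnormalized state of `Z` conditional on the outcome with effect `x` of a measurement
of `Y`. -/
noncomputable def effectMarginal (x : Matrix Y Y ℂ) (κ : Matrix (Y × Z) (Y × Z) ℂ) :
    Matrix Z Z ℂ :=
  partialTrace (keepSnd Y Z) (embed (keepFst Y Z) x * κ)

lemma effectMarginal_isHermitian (hx : x.IsHermitian) (hκ : κ.IsHermitian) :
    (effectMarginal x κ).IsHermitian := by
  rw [Matrix.IsHermitian, effectMarginal, ← partialTrace_conjTranspose, conjTranspose_mul,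
    ← starAlgHom_conjTranspose, hx.eq, hκ.eq, partialTrace_keepSnd_mul_embed_keepFst]

lemma effectMarginal_posSemidef (hx : x.IsHermitian) (hxx : x * x = x) (hκ : κ.PosSemidef) :
    (effectMarginal x κ).PosSemidef := by
  have eq_conj : effectMarginal x κ = partialTrace (keepSnd Y Z)
      (embed (keepFst Y Z) x * κ * (embed (keepFst Y Z) x)ᴴ) := by
    rw [← starAlgHom_conjTranspose, hx.eq, partialTrace_keepSnd_mul_embed_keepFst,
      ← Matrix.mul_assoc, ← map_mul, hxx, effectMarginal]
  exact eq_conj ▸ partialTrace_posSemidef _ (hκ.mul_mul_conjTranspose_same _)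

lemma cfc_nonzeroIndicator_mul_effectMarginal (hκ : κ.PosSemidef) :
    cfc nonzeroIndicator (partialTrace (keepSnd Y Z) κ) * effectMarginal x κ =
      effectMarginal x κ := by
  rw [effectMarginal, ← partialTrace_embed_mul, ← Matrix.mul_assoc,
    ← embed_keepFst_mul_embed_keepSnd, Matrix.mul_assoc,
    (isRestriction_partialTrace _ κ).map_cfc_nonzeroIndicator_mul hκ (partialTrace_posSemidef _ hκ)]

end EffectMarginal

section MarkovAtThd

variable {X Y Z : Type*} [Fintype X] [DecidableEq X] [Fintype Y] [DecidableEq Y] [Fintype Z]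
  [DecidableEq Z] {T : Matrix (X × Y × Z) (X × Y × Z) ℂ}

/-- The effects `y` and `x` give perfectly correlated outcomes on `Y` and `X` in the state `T`. -/
def IsCorrelated (T : Matrix (X × Y × Z) (X × Y × Z) ℂ) (y : Matrix Y Y ℂ) (x : Matrix X X ℂ) :
    Prop :=
  embed (keepSnd X Y) y * partialTrace (keepFstSnd X Y Z) T =
    embed (keepFst X Y) x * partialTrace (keepFstSnd X Y Z) T

variable {y : Matrix Y Y ℂ} {x : Matrix X X ℂ}

lemma IsCorrelated.embed_mul_cfc_sqrt (h : IsCorrelated T y x) (hT : T.PosSemidef) :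
    embed (keepSnd X (Y × Z)) (embed (keepFst Y Z) y) * cfc Real.sqrt T =
      embed (keepFst X (Y × Z)) x * cfc Real.sqrt T := by
  have restrict : IsRestriction (embed (keepFstSnd X Y Z)) (cfc Real.sqrt T * (cfc Real.sqrt T)ᴴ)
      (partialTrace (keepFstSnd X Y Z) T) := by
    rw [conjTranspose_cfc, cfc_sqrt_mul_cfc_sqrt hT]
    exact isRestriction_partialTrace _ _
  rw [← embed_keepFstSnd_keepSnd, ← embed_keepFstSnd_keepFst, ← sub_eq_zero, ← Matrix.sub_mul,
    ← map_sub, restrict.map_mul_eq_zero_iff (partialTrace_posSemidef _ hT), Matrix.sub_mul, h,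
    sub_self]

lemma IsCorrelated.effectMarginal_eq (h : IsCorrelated T y x) (hT : T.PosSemidef) :
    effectMarginal x (partialTrace (keepFstThd X Y Z) T) =
      effectMarginal y (partialTrace (keepSnd X (Y × Z)) T) := by
  have embed_mul : embed (keepSnd X (Y × Z)) (embed (keepFst Y Z) y) * T =
      embed (keepFst X (Y × Z)) x * T := by
    rw [← cfc_sqrt_mul_cfc_sqrt hT, ← Matrix.mul_assoc, h.embed_mul_cfc_sqrt hT, Matrix.mul_assoc]
  rw [effectMarginal, effectMarginal, ← partialTrace_embed_mul, ← partialTrace_embed_mul, embed_mul,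
    ← partialTrace_keepSnd_keepFstThd, embed_keepFstThd_keepFst]

lemma partialTrace_keepSnd_embed_keepFstThd (κ : Matrix (X × Z) (X × Z) ℂ) :
    partialTrace (keepSnd X (Y × Z)) (embed (keepFstThd X Y Z) κ) =
      embed (keepSnd Y Z) (partialTrace (keepSnd X Z) κ) := by
  simp only [partialTrace_eq_sum, block_keepSnd_embed_keepFstThd, map_sum]

/- `√T` factors through `√κ η^(-1/2)`, so annihilating `x √T` by an effect orthogonal to `y`
carries over to the marginal after tracing out `X`. -/
lemma IsMarkovAtThd.embed_mul_cfc_sqrt_eq_zero (h : IsMarkovAtThd T) (hT : T.PosSemidef)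
    (correlated : IsCorrelated T y x) {z : Matrix Y Y ℂ} (hzy : z * y = 0) :
    embed (keepFst Y Z) z * (cfc Real.sqrt (partialTrace (keepSnd X (Y × Z)) T) *
      embed (keepSnd Y Z)
        (cfc invSqrt (partialTrace (keepSnd Y Z) (partialTrace (keepSnd X (Y × Z)) T)) *
          effectMarginal y (partialTrace (keepSnd X (Y × Z)) T))) = 0 := by
  have factor := (isMarginalSquare_fst_thd_snd hT).cfc_sqrt_eq h
  have hκ' := partialTrace_posSemidef (keepFstThd X Y Z) hT
  rw [← correlated.effectMarginal_eq hT]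
  rw [partialTrace_keepSnd_keepFstThd] at factor
  set κ := partialTrace (keepSnd X (Y × Z)) T
  set κ' := partialTrace (keepFstThd X Y Z) T
  set g := cfc invSqrt (partialTrace (keepSnd Y Z) κ)
  have annihilates : embed (keepSnd X (Y × Z)) (embed (keepFst Y Z) z) *
      (embed (keepFst X (Y × Z)) x * cfc Real.sqrt T) = 0 := by
    rw [← correlated.embed_mul_cfc_sqrt hT, ← Matrix.mul_assoc, ← map_mul, ← map_mul, hzy,
      map_zero, map_zero, Matrix.zero_mul]
  have annihilates_marginal : embed (keepSnd X (Y × Z)) (embed (keepFst Y Z) z *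
      (cfc Real.sqrt κ * embed (keepSnd Y Z) g)) *
        embed (keepFstThd X Y Z) (embed (keepFst X Z) x * κ') = 0 := by
    have commute := embed_keepFst_mul_embed_keepSnd x (cfc Real.sqrt κ * embed (keepSnd Y Z) g)
    rw [map_mul (embed (keepSnd X (Y × Z))), map_mul (embed (keepFstThd X Y Z)),
      embed_keepFstThd_keepFst, Matrix.mul_assoc, ← Matrix.mul_assoc _ _ (embed _ κ'), ← commute,
      ← cfc_sqrt_mul_cfc_sqrt hκ', ← Matrix.zero_mul (embed (keepFstThd X Y Z) (cfc Real.sqrt κ')),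
      ← annihilates, ← factor]
    simp only [map_mul, Matrix.mul_assoc, embed_keepFstThd_keepSnd]
  have traced := congrArg (partialTrace (keepSnd X (Y × Z))) annihilates_marginal
  rw [partialTrace_embed_mul, partialTrace_keepSnd_embed_keepFstThd, partialTrace_zero] at traced
  rw [← traced, map_mul, effectMarginal]
  simp only [Matrix.mul_assoc]

theorem IsMarkovAtThd.effectMarginal_mul_effectMarginal_eq_zero (h : IsMarkovAtThd T)
    (hT : T.PosSemidef) {y₁ y₂ : Matrix Y Y ℂ} {x₁ x₂ : Matrix X X ℂ} (hy₁ : y₁.IsHermitian)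
    (hy₂ : y₂.IsHermitian) (idem : y₂ * y₂ = y₂) (orth : y₂ * y₁ = 0)
    (correlated₁ : IsCorrelated T y₁ x₁) (correlated₂ : IsCorrelated T y₂ x₂) :
    effectMarginal y₁ (partialTrace (keepSnd X (Y × Z)) T) *
      effectMarginal y₂ (partialTrace (keepSnd X (Y × Z)) T) = 0 := by
  have annihilates := h.embed_mul_cfc_sqrt_eq_zero hT correlated₁ orth
  have fixes := h.embed_mul_cfc_sqrt_eq_zero hT correlated₂ (z := 1 - y₂) (by
    rw [Matrix.sub_mul, Matrix.one_mul, idem, sub_self])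
  rw [map_sub, map_one, Matrix.sub_mul, Matrix.one_mul, sub_eq_zero] at fixes
  have hκ := partialTrace_posSemidef (keepSnd X (Y × Z)) hT
  set κ := partialTrace (keepSnd X (Y × Z)) T
  have hη := partialTrace_posSemidef (keepSnd Y Z) hκ
  set η := partialTrace (keepSnd Y Z) κ
  set δ₁ := effectMarginal y₁ κ with δ₁_def
  set δ₂ := effectMarginal y₂ κ
  have adjoint := congrArg conjTranspose annihilates
  rw [conjTranspose_mul, conjTranspose_mul, conjTranspose_zero, ← starAlgHom_conjTranspose,
    ← starAlgHom_conjTranspose, conjTranspose_mul, δ₁_def, (effectMarginal_isHermitian hy₁ hκ.1).eq,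
    conjTranspose_cfc, conjTranspose_cfc, hy₂.eq] at adjoint
  have product_zero : embed (keepSnd Y Z) (δ₁ * cfc invSqrt η) * (κ *
      embed (keepSnd Y Z) (cfc invSqrt η * δ₂)) = 0 := by
    rw [← cfc_sqrt_mul_cfc_sqrt hκ, Matrix.mul_assoc, fixes, ← Matrix.mul_assoc,
      ← Matrix.mul_assoc, adjoint, Matrix.zero_mul]
  have traced := congrArg (partialTrace (keepSnd Y Z)) product_zero
  rw [partialTrace_embed_mul, partialTrace_mul_embed, partialTrace_zero] at traced
  calc δ₁ * δ₂
      = δ₁ * (cfc nonzeroIndicator η * (cfc nonzeroIndicator η * δ₂)) := by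
        rw [cfc_nonzeroIndicator_mul_effectMarginal hκ, cfc_nonzeroIndicator_mul_effectMarginal hκ]
    _ = δ₁ * (cfc invSqrt η * cfc Real.sqrt η * (cfc Real.sqrt η * cfc invSqrt η * δ₂)) := by
        rw [cfc_invSqrt_mul_cfc_sqrt hη, cfc_sqrt_mul_cfc_invSqrt hη]
    _ = δ₁ * cfc invSqrt η * (cfc Real.sqrt η * cfc Real.sqrt η * (cfc invSqrt η * δ₂)) := by
        simp only [Matrix.mul_assoc]
    _ = 0 := by
        rw [cfc_sqrt_mul_cfc_sqrt hη]
        exact traced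

end MarkovAtThd

/-! ### Entropies of block-diagonal states -/

section BlockEntropy

variable {ι m n : Type*} [Fintype ι] [Fintype m] [DecidableEq m] [Fintype n] [DecidableEq n]

lemma natEntropy_one : natEntropy (1 : Matrix n n ℂ) = 0 := by
  rw [natEntropy, cfc_apply_one, Real.negMulLog_one, map_zero, trace_zero, Complex.zero_re]

lemma natEntropy_of_unique [Unique n] {M : Matrix n n ℂ} (hM : M.IsHermitian) :
    natEntropy M = Real.negMulLog M.trace.re := by
  have trace_eq : M = (M.trace.re : ℂ) • (1 : Matrix n n ℂ) := by
    ext i j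
    rw [Subsingleton.elim i default, Subsingleton.elim j default]
    simpa [Matrix.trace] using (hM.coe_re_apply_self default).symm
  rw [trace_eq, natEntropy_smul isHermitian_one, natEntropy_one, mul_zero, zero_add, ← trace_eq]
  simp

lemma natEntropy_sum_conj {W : ι → Matrix m n ℂ} {ν : ι → Matrix n n ℂ}
    (isometry : ∀ i, (W i)ᴴ * W i = 1) (orth : ∀ i j, i ≠ j → (W i)ᴴ * W j = 0)
    (hν : ∀ i, (ν i).IsHermitian) :
    natEntropy (∑ i, W i * ν i * (W i)ᴴ) = ∑ i, natEntropy (ν i) := by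
  have block_eq (i : ι) : (W i)ᴴ * (W i * ν i) = ν i := by
    rw [← Matrix.mul_assoc, isometry, Matrix.one_mul]
  rw [natEntropy_sum_mul]
  · simp only [block_eq]
  · rw [IsHermitian, conjTranspose_sum]
    exact Finset.sum_congr rfl fun i _ => isHermitian_mul_mul_conjTranspose (W i) (hν i)
  · simpa only [block_eq] using hν
  · intro i j hij
    rw [← Matrix.mul_assoc, orth i j hij, Matrix.zero_mul]

lemma natEntropy_sum_of_mul_eq_zero {E : ι → Matrix n n ℂ} (hE : ∀ i, (E i).PosSemidef)
    (orth : ∀ i j, i ≠ j → E i * E j = 0) : natEntropy (∑ i, E i) = ∑ i, natEntropy (E i) := by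
  have sqrt_orth (i j : ι) (hij : i ≠ j) : cfc Real.sqrt (E i) * cfc Real.sqrt (E j) = 0 := by
    have left : E j * cfc Real.sqrt (E i) = 0 :=
      (mul_cfc_sqrt_eq_zero_iff (hE i)).2 (orth j i hij.symm)
    have adjoint := congrArg conjTranspose left
    rw [conjTranspose_mul, conjTranspose_cfc, (hE j).1.eq, conjTranspose_zero] at adjoint
    exact (mul_cfc_sqrt_eq_zero_iff (hE j)).2 adjoint
  have sum_mul := natEntropy_sum_mul (X := fun i => cfc Real.sqrt (E i))
    (Y := fun i => cfc Real.sqrt (E i))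
  simp only [fun i => cfc_sqrt_mul_cfc_sqrt (hE i)] at sum_mul
  exact sum_mul (posSemidef_sum _ fun i _ => hE i).1 (fun i => (hE i).1) sqrt_orth

lemma conjTranspose_mul_self_apply (V : unitaryGroup n ℂ) (b b' : n) :
    ∑ i, star ((V : Matrix n n ℂ) i b) * (V : Matrix n n ℂ) i b' = if b = b' then 1 else 0 := by
  rw [← Matrix.one_apply, ← Unitary.coe_star_mul_self V, Matrix.mul_apply]
  rfl

/-- The isometry `|v⟩ ↦ |v_b⟩ ⊗ |v⟩`, where `v_b` is the `b`-th column of `V`. -/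
noncomputable def columnIsometry (V : unitaryGroup n ℂ) (m : Type*) [DecidableEq m] (b : n) :
    Matrix (n × m) m ℂ :=
  Matrix.of fun p j => if p.2 = j then (V : Matrix n n ℂ) p.1 b else 0

lemma columnIsometry_conjTranspose_mul (V : unitaryGroup n ℂ) (b b' : n) :
    (columnIsometry V m b)ᴴ * columnIsometry V m b' = if b = b' then 1 else 0 := by
  ext i j
  simp only [columnIsometry, Matrix.mul_apply, conjTranspose_apply, of_apply,
    Fintype.sum_prod_type, apply_ite star, star_zero, ite_mul, zero_mul, mul_ite, mul_zero,
    Finset.sum_ite_eq', Finset.mem_univ, if_true]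
  rw [Finset.sum_ite_irrel, conjTranspose_mul_self_apply]
  by_cases hb : b = b' <;> simp [hb, Matrix.one_apply, @eq_comm _ j i]

lemma natEntropy_sum_columnIsometry (V : unitaryGroup n ℂ) {ν : n → Matrix m m ℂ}
    (hν : ∀ b, (ν b).IsHermitian) :
    natEntropy (∑ b, columnIsometry V m b * ν b * (columnIsometry V m b)ᴴ) =
      ∑ b, natEntropy (ν b) :=
  natEntropy_sum_conj (fun b => by rw [columnIsometry_conjTranspose_mul, if_pos rfl])
    (fun b b' h => by rw [columnIsometry_conjTranspose_mul, if_neg h]) hν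

end BlockEntropy

section ClassicalQuantumEntropy

variable {Y Z : Type*} [Fintype Y] [DecidableEq Y] [Fintype Z] [DecidableEq Z]
  {κ : Matrix (Y × Z) (Y × Z) ℂ} {V : unitaryGroup Y ℂ} {lam : Y → ℝ} {ν : Y → Matrix Z Z ℂ}

lemma unitaryDiagonal_apply_apply (d : Y → ℂ) (y y' : Y) :
    unitaryDiagonal V d y y' =
      ∑ b, (V : Matrix Y Y ℂ) y b * d b * star ((V : Matrix Y Y ℂ) y' b) := by
  rw [unitaryDiagonal_apply, Matrix.mul_apply]
  simp only [mul_diagonal, conjTranspose_apply]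

lemma natEntropy_unitaryDiagonal (V : unitaryGroup Y ℂ) (lam : Y → ℝ) :
    natEntropy (unitaryDiagonal V fun b => (lam b : ℂ)) = ∑ b, Real.negMulLog (lam b) := by
  let column (b : Y) : Matrix Y Unit ℂ := Matrix.of fun y _ => (V : Matrix Y Y ℂ) y b
  have eq_sum : unitaryDiagonal V (fun b => (lam b : ℂ)) =
      ∑ b, column b * ((lam b : ℂ) • (1 : Matrix Unit Unit ℂ)) * (column b)ᴴ := by
    ext y y'
    rw [unitaryDiagonal_apply_apply, Matrix.sum_apply]
    simp [column, Matrix.mul_apply, mul_comm]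
  have column_mul (b b' : Y) : (column b)ᴴ * column b' = if b = b' then 1 else 0 := by
    ext i j
    refine (conjTranspose_mul_self_apply V b b').trans ?_
    split_ifs <;> rfl
  rw [eq_sum, natEntropy_sum_conj (fun b => (column_mul b b).trans (if_pos rfl))
    (fun b b' h => (column_mul b b').trans (if_neg h))
    fun b => isHermitian_one.smul (Complex.conj_ofReal _)]
  exact Finset.sum_congr rfl fun b _ => by
    rw [natEntropy_smul isHermitian_one, natEntropy_one]
    simp

lemma IsClassicalQuantum.eq_sum (h : IsClassicalQuantum κ V lam ν) :
    κ = ∑ b, columnIsometry V Z b * ((lam b : ℂ) • ν b) * (columnIsometry V Z b)ᴴ := by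
  ext ⟨y, z⟩ ⟨y', z'⟩
  have entry : κ (y, z) (y', z') = unitaryDiagonal V (fun b => (lam b : ℂ) * ν b z z') y y' :=
    congrFun (congrFun (h.block_eq z z') y) y'
  rw [entry, unitaryDiagonal_apply_apply, Matrix.sum_apply]
  refine Finset.sum_congr rfl fun b _ => ?_
  simp only [columnIsometry, Matrix.mul_apply, conjTranspose_apply, of_apply, Matrix.smul_apply,
    smul_eq_mul, ite_mul, zero_mul, apply_ite star, star_zero, mul_ite, mul_zero, Finset.sum_ite_eq,
    Finset.mem_univ, if_true]

lemma IsClassicalQuantum.natEntropy_eq (h : IsClassicalQuantum κ V lam ν) :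
    natEntropy κ = natEntropy (partialTrace (keepFst Y Z) κ) + ∑ b, lam b * natEntropy (ν b) := by
  rw [h.partialTrace_eq, natEntropy_unitaryDiagonal]
  conv_lhs => rw [h.eq_sum]
  rw [natEntropy_sum_columnIsometry, ← Finset.sum_add_distrib]
  · refine Finset.sum_congr rfl fun b _ => ?_
    rw [natEntropy_smul (h.posSemidef b).1]
    by_cases hb : lam b = 0
    · simp [hb]
    · rw [h.trace_eq_one b hb, Complex.one_re, mul_one, add_comm]
  · exact fun b => (h.posSemidef b).1.smul (Complex.conj_ofReal _)

end ClassicalQuantumEntropy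

/-! ### Subadditivity conditional on a label -/

section Subadditivity

variable {C D : Type*} [Fintype C] [DecidableEq C] [Fintype D] [DecidableEq D]
  {E : Matrix (C × D) (C × D) ℂ}

/- Strong subadditivity with a trivial middle system; for unnormalized `E` its entropy
`negMulLog (tr E)` survives. -/
lemma natEntropy_add_le_of_posSemidef (hE : E.PosSemidef) :
    Real.negMulLog E.trace.re + natEntropy E ≤
      natEntropy (partialTrace (keepFst C D) E) + natEntropy (partialTrace (keepSnd C D) E) := by
  have square := isMarginalSquare_partialTrace (e := keepFst C D) (e' := keepSnd C D)
    (e'' := (Equiv.punitProd.{0} C).symm) hE (by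
      ext c c'
      simp only [partialTrace, keepFst, keepSnd, of_apply, embed_apply]
      by_cases hc : c = c'
      · simpa [hc] using Finset.sum_comm
      · simp [hc])
  have subadditive := square.natEntropy_add_le
  rwa [natEntropy_of_unique square.posSemidef_middle.1, trace_partialTrace, trace_partialTrace]
    at subadditive

variable {B J : Type*} [Fintype B] [DecidableEq B] [Fintype J] {x : J → Matrix B B ℂ}
  {ω : Matrix (B × C × D) (B × C × D) ℂ}

lemma partialTrace_keepFst_effectMarginal (x : Matrix B B ℂ)
    (ω : Matrix (B × C × D) (B × C × D) ℂ) :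
    partialTrace (keepFst C D) (effectMarginal x ω) =
      effectMarginal x (partialTrace (keepFstSnd B C D) ω) := by
  rw [effectMarginal, ← partialTrace_keepSnd_keepFstSnd, ← embed_keepFstSnd_keepFst,
    partialTrace_embed_mul, effectMarginal]

lemma partialTrace_keepSnd_effectMarginal (x : Matrix B B ℂ)
    (ω : Matrix (B × C × D) (B × C × D) ℂ) :
    partialTrace (keepSnd C D) (effectMarginal x ω) =
      effectMarginal x (partialTrace (keepFstThd B C D) ω) := by
  rw [effectMarginal, ← partialTrace_keepSnd_keepFstThd, ← embed_keepFstThd_keepFst,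
    partialTrace_embed_mul, effectMarginal]

lemma sum_effectMarginal (sum_eq : ∑ j, x j = 1) (κ : Matrix (B × C) (B × C) ℂ) :
    ∑ j, effectMarginal (x j) κ = partialTrace (keepSnd B C) κ := by
  simp only [effectMarginal]
  rw [← partialTrace_sum, ← Finset.sum_mul, ← map_sum, sum_eq, map_one, Matrix.one_mul]

lemma mul_eq_zero_of_partialTrace_mul_eq_zero {N M K : Type*} [Fintype N] [Fintype M]
    [Fintype K] (e : N ≃ M × K) {R T : Matrix N N ℂ} (hR : R.PosSemidef) (hT : T.PosSemidef)
    (h : partialTrace e T * partialTrace e R = 0) : R * T = 0 := by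
  classical
  have hτ := partialTrace_posSemidef e hR
  have hσ := partialTrace_posSemidef e hT
  set τ := partialTrace e R with τ_def
  set σ := partialTrace e T with σ_def
  have support_mul_support : cfc nonzeroIndicator τ * cfc nonzeroIndicator σ = 0 := by
    have mul_support := mul_cfc_nonzeroIndicator_eq_zero hτ ((mul_cfc_sqrt_eq_zero_iff hτ).2 h)
    have adjoint := congrArg conjTranspose mul_support
    rw [conjTranspose_mul, conjTranspose_cfc, hσ.1.eq, conjTranspose_zero] at adjoint
    exact mul_cfc_nonzeroIndicator_eq_zero hσ ((mul_cfc_sqrt_eq_zero_iff hσ).2 adjoint)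
  have mul_support := congrArg conjTranspose
    ((isRestriction_partialTrace e R).map_cfc_nonzeroIndicator_mul hR hτ)
  rw [conjTranspose_mul, ← starAlgHom_conjTranspose, conjTranspose_cfc, hR.1.eq] at mul_support
  rw [← mul_support, ← (isRestriction_partialTrace e T).map_cfc_nonzeroIndicator_mul hT hσ,
    Matrix.mul_assoc, ← Matrix.mul_assoc (embed e _), ← map_mul, ← τ_def, ← σ_def,
    support_mul_support, map_zero, Matrix.zero_mul, Matrix.mul_zero]

theorem natEntropy_le_of_orthogonal_effectMarginal (hω : ω.PosSemidef)
    (hx : ∀ j, (x j).IsHermitian) (idem : ∀ j, x j * x j = x j) (sum_eq : ∑ j, x j = 1)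
    (orth : ∀ i j, i ≠ j → effectMarginal (x i) (partialTrace (keepFstThd B C D) ω) *
      effectMarginal (x j) (partialTrace (keepFstThd B C D) ω) = 0) :
    natEntropy (partialTrace (keepSnd B (C × D)) ω) ≤
      natEntropy (partialTrace (keepSnd B D) (partialTrace (keepFstThd B C D) ω)) +
        ∑ j, (natEntropy (effectMarginal (x j) (partialTrace (keepFstSnd B C D) ω)) -
          Real.negMulLog (effectMarginal (x j) (partialTrace (keepFstSnd B C D) ω)).trace.re) := by
  have pos (j : J) : (effectMarginal (x j) ω).PosSemidef :=
    effectMarginal_posSemidef (hx j) (idem j) hω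
  have pos_marginal (j : J) :
      (effectMarginal (x j) (partialTrace (keepFstThd B C D) ω)).PosSemidef :=
    effectMarginal_posSemidef (hx j) (idem j) (partialTrace_posSemidef _ hω)
  have orth_joint (i j : J) (hij : i ≠ j) : effectMarginal (x i) ω * effectMarginal (x j) ω = 0 :=
    mul_eq_zero_of_partialTrace_mul_eq_zero (keepSnd C D) (pos i) (pos j) (by
      rw [partialTrace_keepSnd_effectMarginal, partialTrace_keepSnd_effectMarginal,
        orth j i hij.symm])
  rw [← sum_effectMarginal sum_eq ω, ← sum_effectMarginal sum_eq (partialTrace _ ω),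
    natEntropy_sum_of_mul_eq_zero pos orth_joint, natEntropy_sum_of_mul_eq_zero pos_marginal orth,
    ← Finset.sum_add_distrib]
  refine Finset.sum_le_sum fun j _ => ?_
  have subadditive := natEntropy_add_le_of_posSemidef (pos j)
  rw [← trace_partialTrace (keepFst C D), partialTrace_keepFst_effectMarginal,
    partialTrace_keepSnd_effectMarginal] at subadditive
  linarith

end Subadditivity

section Label

variable {Y Z J : Type*} [Fintype Y] [DecidableEq Y] [Fintype Z] [DecidableEq Z] [DecidableEq J]

/-- The projection onto the span of the columns of `V` whose index carries the label `j`. -/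
noncomputable def labelProj (V : unitaryGroup Y ℂ) (label : Y → J) (j : J) : Matrix Y Y ℂ :=
  unitaryDiagonal V fun b => if label b = j then 1 else 0

variable (V : unitaryGroup Y ℂ) (label : Y → J)

lemma labelProj_isHermitian (j : J) : (labelProj V label j).IsHermitian := by
  rw [labelProj, Matrix.IsHermitian, ← star_eq_conjTranspose, ← map_star]
  congr 1
  ext b
  simp [apply_ite]

lemma labelProj_mul (i j : J) :
    labelProj V label i * labelProj V label j = if i = j then labelProj V label i else 0 := by
  rw [labelProj, labelProj, ← map_mul]
  split_ifs with hij
  · congr 1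
    ext b
    simp [hij]
  · convert map_zero (unitaryDiagonal V)
    ext b
    by_cases hb : label b = i <;> simp [hb, hij]

lemma sum_labelProj [Fintype J] : ∑ j, labelProj V label j = 1 := by
  simp only [labelProj]
  rw [← map_sum, ← map_one (unitaryDiagonal V)]
  congr 1
  ext b
  simp

lemma effectMarginal_apply (x : Matrix Y Y ℂ) (κ : Matrix (Y × Z) (Y × Z) ℂ) (k l : Z) :
    effectMarginal x κ k l = (x * block (keepFst Y Z) k l κ).trace := by
  rw [← block_embed_mul]
  rfl

namespace IsClassicalQuantum

variable {V label} {κ : Matrix (Y × Z) (Y × Z) ℂ} {lam : Y → ℝ} {ν : J → Matrix Z Z ℂ}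

lemma effectMarginal_labelProj (h : IsClassicalQuantum κ V lam fun b => ν (label b)) (j : J) :
    effectMarginal (labelProj V label j) κ = ((∑ b with label b = j, lam b : ℝ) : ℂ) • ν j := by
  ext k l
  rw [effectMarginal_apply, h.block_eq, labelProj, ← map_mul, trace_unitaryDiagonal,
    Matrix.smul_apply, smul_eq_mul, Complex.ofReal_sum, Finset.sum_mul, Finset.sum_filter]
  refine Finset.sum_congr rfl fun b _ => ?_
  by_cases hb : label b = j <;> simp [hb]

lemma natEntropy_effectMarginal_labelProj
    (h : IsClassicalQuantum κ V lam fun b => ν (label b)) (j : J) :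
    natEntropy (effectMarginal (labelProj V label j) κ) -
        Real.negMulLog (effectMarginal (labelProj V label j) κ).trace.re =
      ∑ b with label b = j, lam b * natEntropy (ν (label b)) := by
  have sum_eq : ∑ b with label b = j, lam b * natEntropy (ν (label b)) =
      (∑ b with label b = j, lam b) * natEntropy (ν j) := by
    rw [Finset.sum_mul]
    exact Finset.sum_congr rfl fun b hb => by rw [(Finset.mem_filter.1 hb).2]
  rw [h.effectMarginal_labelProj, sum_eq]
  by_cases zero : ∑ b with label b = j, lam b = 0
  · have natEntropy_zero := natEntropy_smul (isHermitian_zero (n := Z) (α := ℂ)) 0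
    simp_all
  · obtain ⟨b, hb, lam_ne⟩ := Finset.exists_ne_zero_of_sum_ne_zero zero
    obtain rfl := (Finset.mem_filter.1 hb).2
    rw [natEntropy_smul (h.posSemidef b).1, trace_smul, h.trace_eq_one b lam_ne]
    simp

end IsClassicalQuantum

end Label

section Triple

variable {A B C D : Type*} [Fintype A] [DecidableEq A] [Fintype B] [DecidableEq B]
  [Fintype C] [DecidableEq C] [Fintype D] [DecidableEq D]

lemma IsClassicalQuantum.natEntropy_add_le {J : Type*} [Finite J] [DecidableEq J] {label : B → J}
    {V : unitaryGroup B ℂ} {lam : B → ℝ} {ν : J → Matrix C C ℂ}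
    {ω : Matrix (B × C × D) (B × C × D) ℂ}
    (h : IsClassicalQuantum (partialTrace (keepFstSnd B C D) ω) V lam fun b => ν (label b))
    (hω : ω.PosSemidef)
    (orth : ∀ i j, i ≠ j →
      effectMarginal (labelProj V label i) (partialTrace (keepFstThd B C D) ω) *
        effectMarginal (labelProj V label j) (partialTrace (keepFstThd B C D) ω) = 0) :
    natEntropy (partialTrace (keepFst B C) (partialTrace (keepFstSnd B C D) ω)) +
        natEntropy (partialTrace (keepSnd B (C × D)) ω) ≤
      natEntropy (partialTrace (keepFstSnd B C D) ω) +
        natEntropy (partialTrace (keepSnd B D) (partialTrace (keepFstThd B C D) ω)) := by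
  have := Fintype.ofFinite J
  have bound := natEntropy_le_of_orthogonal_effectMarginal hω (labelProj_isHermitian V label)
    (fun j => by rw [labelProj_mul, if_pos rfl]) (sum_labelProj V label) orth
  simp only [h.natEntropy_effectMarginal_labelProj, Finset.sum_fiberwise] at bound
  rw [h.natEntropy_eq]
  linarith

/- The common label of `A` and `B` is the value of the conditional state of `C`; by the third
Markov condition it can also be read off from `D`. -/
theorem natEntropy_add_le_of_isMarkov {T : Matrix (A × B × C) (A × B × C) ℂ}
    {T' : Matrix (A × B × D) (A × B × D) ℂ} {ω : Matrix (B × C × D) (B × C × D) ℂ}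
    (hT : T.PosSemidef) (hT' : T'.PosSemidef) (hω : ω.PosSemidef)
    (h_fst : IsMarkovAtFst T) (h_snd : IsMarkovAtSnd T) (h_thd : IsMarkovAtThd T')
    (marginal_AB : partialTrace (keepFstSnd A B D) T' = partialTrace (keepFstSnd A B C) T)
    (marginal_BC : partialTrace (keepFstSnd B C D) ω = partialTrace (keepSnd A (B × C)) T)
    (marginal_BD : partialTrace (keepFstThd B C D) ω = partialTrace (keepSnd A (B × D)) T') :
    natEntropy (partialTrace (keepSnd A B) (partialTrace (keepFstSnd A B C) T)) +
        natEntropy (partialTrace (keepSnd B (C × D)) ω) ≤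
      natEntropy (partialTrace (keepSnd A (B × C)) T) +
        natEntropy (partialTrace (keepSnd A D) (partialTrace (keepFstThd A B D) T')) := by
  classical
  obtain ⟨V, lam, m, V', m', classicalQuantum, correlated⟩ :=
    exists_isClassicalQuantum_of_isMarkovAtFst_of_isMarkovAtSnd h_fst h_snd hT
  let label : B → Set.range m := Set.rangeFactorization m
  have isCorrelated_labelProj (j : Set.range m) :
      IsCorrelated T' (labelProj V label j) (labelProj V' m' j) := by
    rw [IsCorrelated, marginal_AB, labelProj, labelProj,
      ← correlated fun M => if M = j then 1 else 0]
    simp only [label, Subtype.ext_iff, Set.rangeFactorization_coe]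
  rw [partialTrace_keepSnd_keepFstSnd, partialTrace_keepSnd_keepFstThd, ← marginal_BC,
    ← marginal_BD]
  rw [← marginal_BC] at classicalQuantum
  refine IsClassicalQuantum.natEntropy_add_le (label := label) (ν := fun j => j.1 * j.1)
    classicalQuantum hω fun i j hij => ?_
  rw [marginal_BD]
  exact h_thd.effectMarginal_mul_effectMarginal_eq_zero hT' (labelProj_isHermitian V label i)
    (labelProj_isHermitian V label j) (by rw [labelProj_mul, if_pos rfl])
    (by rw [labelProj_mul, if_neg hij.symm]) (isCorrelated_labelProj i) (isCorrelated_labelProj j)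

end Triple

section BaseTwo

lemma vNEntropy_add_sub_sub_eq_zero_iff {n₁ n₂ n₃ n₄ : Type*} [Fintype n₁] [DecidableEq n₁]
    [Fintype n₂] [DecidableEq n₂] [Fintype n₃] [DecidableEq n₃] [Fintype n₄] [DecidableEq n₄]
    {M₁ : Matrix n₁ n₁ ℂ} {M₂ : Matrix n₂ n₂ ℂ} {M₃ : Matrix n₃ n₃ ℂ} {M₄ : Matrix n₄ n₄ ℂ}
    (h₁ : M₁.IsHermitian) (h₂ : M₂.IsHermitian) (h₃ : M₃.IsHermitian) (h₄ : M₄.IsHermitian) :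
    vNEntropy M₁ + vNEntropy M₂ - vNEntropy M₃ - vNEntropy M₄ = 0 ↔
      natEntropy M₃ + natEntropy M₄ = natEntropy M₁ + natEntropy M₂ := by
  rw [← vNEntropy_mul_log_two h₁, ← vNEntropy_mul_log_two h₂, ← vNEntropy_mul_log_two h₃,
    ← vNEntropy_mul_log_two h₄, ← add_mul, ← add_mul,
    mul_left_inj' (Real.log_pos one_lt_two).ne', sub_sub, sub_eq_zero, eq_comm]

variable {X Y Z : Type*} [Fintype X] [DecidableEq X] [Fintype Y] [DecidableEq Y] [Fintype Z]
  [DecidableEq Z] {T : Matrix (X × Y × Z) (X × Y × Z) ℂ}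

lemma isMarkovAtFst_iff (hT : T.PosSemidef) :
    IsMarkovAtFst T ↔ vNEntropy (partialTrace (keepFstThd X Y Z) T) +
      vNEntropy (partialTrace (keepFstSnd X Y Z) T) -
      vNEntropy (partialTrace (keepFst X Y) (partialTrace (keepFstSnd X Y Z) T)) -
      vNEntropy T = 0 := by
  have hXY := partialTrace_posSemidef (keepFstSnd X Y Z) hT
  rw [vNEntropy_add_sub_sub_eq_zero_iff (partialTrace_posSemidef _ hT).1 hXY.1
    (partialTrace_posSemidef _ hXY).1 hT.1,
    add_comm (natEntropy (partialTrace (keepFstThd X Y Z) T)),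
    IsMarkovAtFst]

lemma isMarkovAtSnd_iff (hT : T.PosSemidef) :
    IsMarkovAtSnd T ↔ vNEntropy (partialTrace (keepFstSnd X Y Z) T) +
      vNEntropy (partialTrace (keepSnd X (Y × Z)) T) -
      vNEntropy (partialTrace (keepSnd X Y) (partialTrace (keepFstSnd X Y Z) T)) -
      vNEntropy T = 0 := by
  have hXY := partialTrace_posSemidef (keepFstSnd X Y Z) hT
  exact (vNEntropy_add_sub_sub_eq_zero_iff hXY.1 (partialTrace_posSemidef _ hT).1
    (partialTrace_posSemidef _ hXY).1 hT.1).symm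

lemma isMarkovAtThd_iff (hT : T.PosSemidef) :
    IsMarkovAtThd T ↔ vNEntropy (partialTrace (keepFstThd X Y Z) T) +
      vNEntropy (partialTrace (keepSnd X (Y × Z)) T) -
      vNEntropy (partialTrace (keepSnd X Z) (partialTrace (keepFstThd X Y Z) T)) -
      vNEntropy T = 0 := by
  have hXZ := partialTrace_posSemidef (keepFstThd X Y Z) hT
  exact (vNEntropy_add_sub_sub_eq_zero_iff hXZ.1 (partialTrace_posSemidef _ hT).1
    (partialTrace_posSemidef _ hXZ).1 hT.1).symm

end BaseTwo

section Quadripartite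

variable (A B C D : Type*)

/-- The identification under which `ABC` is kept and `D` is traced out. -/
def keepFstSndThd : A × B × C × D ≃ (A × B × C) × D where
  toFun p := ((p.1, p.2.1, p.2.2.1), p.2.2.2)
  invFun q := (q.1.1, q.1.2.1, q.1.2.2, q.2)

/-- The identification under which `ABD` is kept and `C` is traced out. -/
def keepFstSndFth : A × B × C × D ≃ (A × B × D) × C where
  toFun p := ((p.1, p.2.1, p.2.2.2), p.2.2.1)
  invFun q := (q.1.1, q.1.2.1, q.2, q.1.2.2)

variable {A B C D}

lemma partialTrace_keepFstSnd_keepFstSndFth [Fintype C] [Fintype D]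
    (ρ : Matrix (A × B × C × D) (A × B × C × D) ℂ) :
    partialTrace (keepFstSnd A B D) (partialTrace (keepFstSndFth A B C D) ρ) =
      partialTrace (keepFstSnd A B C) (partialTrace (keepFstSndThd A B C D) ρ) := by
  ext
  exact Finset.sum_comm

lemma partialTrace_keepFstSnd_keepSnd [Fintype A] [Fintype D]
    (ρ : Matrix (A × B × C × D) (A × B × C × D) ℂ) :
    partialTrace (keepFstSnd B C D) (partialTrace (keepSnd A (B × C × D)) ρ) =
      partialTrace (keepSnd A (B × C)) (partialTrace (keepFstSndThd A B C D) ρ) := by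
  ext
  exact Finset.sum_comm

lemma partialTrace_keepFstThd_keepSnd [Fintype A] [Fintype C]
    (ρ : Matrix (A × B × C × D) (A × B × C × D) ℂ) :
    partialTrace (keepFstThd B C D) (partialTrace (keepSnd A (B × C × D)) ρ) =
      partialTrace (keepSnd A (B × D)) (partialTrace (keepFstSndFth A B C D) ρ) := by
  ext
  exact Finset.sum_comm

lemma partialTrace_keepSnd_keepSnd [Fintype A] [Fintype B]
    (ρ : Matrix (A × B × C × D) (A × B × C × D) ℂ) :
    partialTrace (keepSnd B (C × D)) (partialTrace (keepSnd A (B × C × D)) ρ) =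
      Matrix.of fun p q => ∑ a, ∑ b, ρ (a, b, p.1, p.2) (a, b, q.1, q.2) := by
  ext
  exact Finset.sum_comm

end Quadripartite

/-- **Theorem 1′.** If `S(AB)+S(BC)-S(B)-S(ABC) = 0`, `S(CA)+S(AB)-S(A)-S(CAB) = 0`
and `S(AD)+S(DB)-S(D)-S(ADB) = 0`, then `S(ABC)+S(D) ≥ S(AB)+S(CD)`
(equivalently, `I(ABC;D) ≥ I(AB;CD)`). -/
theorem constrained_inequality'
    {A B C D : Type*} [Fintype A] [DecidableEq A] [Fintype B] [DecidableEq B]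
    [Fintype C] [DecidableEq C] [Fintype D] [DecidableEq D]
    (ρ : Matrix (A × B × C × D) (A × B × C × D) ℂ) (hρ : IsState ρ)
    (h1 : SAB ρ + SBC ρ - SB ρ - SABC ρ = 0)
    (h2 : SAC ρ + SAB ρ - SA ρ - SABC ρ = 0)
    (h3 : SAD ρ + SBD ρ - SD ρ - SABD ρ = 0) :
    SAB ρ + SCD ρ ≤ SABC ρ + SD ρ := by
  have hABC := partialTrace_posSemidef (keepFstSndThd A B C D) hρ.1
  have hABD := partialTrace_posSemidef (keepFstSndFth A B C D) hρ.1
  have hBCD := partialTrace_posSemidef (keepSnd A (B × C × D)) hρ.1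
  have bound := natEntropy_add_le_of_isMarkov hABC hABD hBCD ((isMarkovAtFst_iff hABC).2 h2)
    ((isMarkovAtSnd_iff hABC).2 h1) ((isMarkovAtThd_iff hABD).2 h3)
    (partialTrace_keepFstSnd_keepFstSndFth ρ) (partialTrace_keepFstSnd_keepSnd ρ)
    (partialTrace_keepFstThd_keepSnd ρ)
  rw [← vNEntropy_mul_log_two (partialTrace_posSemidef _ (partialTrace_posSemidef _ hABC)).1,
    ← vNEntropy_mul_log_two (partialTrace_posSemidef _ hBCD).1,
    ← vNEntropy_mul_log_two (partialTrace_posSemidef _ hABC).1,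
    ← vNEntropy_mul_log_two (partialTrace_posSemidef _ (partialTrace_posSemidef _ hABD)).1,
    ← add_mul, ← add_mul, mul_le_mul_iff_left₀ (Real.log_pos one_lt_two),
    partialTrace_keepSnd_keepSnd] at bound
  have bound' : SB ρ + SCD ρ ≤ SBC ρ + SD ρ := bound
  linarith
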